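/- arXiv:2407.01747 — 2 statements merged into one kernel-verified Lean document; each statement's English description precedes it below -/
import Mathlib

section
/- For every set Γ of infinite binary sequences, the algorithmic strong dimension of Γ equals the infimum of the set of all s ∈ [0,∞) for which there exists a learning function l that strongly algorithmically s-learns every X ∈ Γ; that is, aDim(Γ) = inf{s ∈ [0,∞) : some learning function strongly algorithmically s-learns every X ∈ Γ}. -/
/-!
The two sets of exponents have the same infimum because each exponent of one set is, up to an
arbitrarily small `ε`, an exponent of the other.

*Gales give learners* (`learnable_of_gale`). Given a lower semicomputable `s`-gale `d`, choose
`s' > s` close to `s` with `2 ^ s'` rational. Then `m w = c * 2 ^ ((1 - s') * |w|) * d w` is a lower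
semicomputable supermartingale, and `c` can be chosen with `m [] ≤ 1`. Let the learner say yes at
`w` when `m w > 2 ^ (k + 1)`, where `k` counts its earlier yes answers. Having said yes `n` times
forces `m > 2 ^ n` somewhere along the path, so Ville's inequality (`ville`) is the measure
condition. As `m` at most doubles with each bit, the yes-count on `w` is at least `log₂ (m w) - 1`,
which is at least `(1 - s') * |w| - O(1)` once `d ≥ 1`. The yes-counts computed from a lower
approximation of `m` increase to the true ones, so the path averages are lower semicomputable.

*Learners give gales* (`gale_of_learnable`). Given a learner with yes-count `N`, take rationals
`q = 2 ^ s'` with `s' > s` and `r = 2 ^ ρ < 2`, and let `d w` be the limit as `t → ∞` of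
`(q / 2) ^ |w|` times the average of `r ^ N` over the extensions of `w` of length `t`. The averages
increase with `t`, and the measure condition bounds them, since `∑ r ^ n * 2 ^ (-n)` converges
(`strSum_indicator_le`, `strSum_rpow_le`). Averaging makes `d` an `s'`-gale, and
`d w ≥ (q / 2) ^ |w| * r ^ N w` makes it succeed when `ρ` is close enough to `1` (`exists_gale`).
Only a lower approximation of `N` is available; replacing `N` by its stage-`t` lower bound
(`stageCount`) in the average at length `t` keeps all of this true and makes the approximations
computable.

Computability of rational-valued functions refers to Mathlib's `Primcodable ℚ`, which numbers the
rationals by the rank of a code of numerator and denominator. Conversion between this numbering and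
fractions of natural numbers is computable by unbounded search (`computable_ratNum`,
`computable_ratDen`, `computable_ratDiv`).
-/

open Filter MeasureTheory

/-- `pref X n` is the string consisting of the first `n` bits of the sequence `X`. -/
def pref (X : ℕ → Bool) (n : ℕ) : List Bool := (List.range n).map X

/-- The cylinder at a finite binary string `w`: all sequences extending `w`. -/
def cylinder (w : List Bool) : Set (ℕ → Bool) := {X | pref X w.length = w}

/-- `l` satisfies the measure condition (w.r.t. the measure `μ`):
for every `n`, the set of sequences along which `l` says yes (`true`)
at least `n` times has measure at most `2⁻ⁿ`. -/
def MeasureCondition (μ : Measure (ℕ → Bool)) (l : List Bool → Bool) : Prop :=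
  ∀ n : ℕ, μ {Y | (n : ℕ∞) ≤ {m : ℕ | l (pref Y m) = true}.encard} ≤ (2 ^ n)⁻¹

/-- The path average of a learning function `l` up to the string `w`. -/
noncomputable def pathAvg (l : List Bool → Bool) (w : List Bool) : ℝ :=
  (∑ i ∈ Finset.range (w.length + 1), if l (w.take i) then (1 : ℝ) else 0) / w.length

/-- `l` strongly `s`-learns `X` (w.r.t. `μ`). -/
def StronglySLearns (μ : Measure (ℕ → Bool)) (l : List Bool → Bool) (s : ℝ) (X : ℕ → Bool) :
    Prop :=
  MeasureCondition μ l ∧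
    1 - s ≤ Filter.liminf (fun n => pathAvg l (pref X n)) Filter.atTop

/-- A real-valued function on strings is lower semicomputable if it is monotonically
approximated from below by a computable rational-valued function. -/
def LowerSemicomputable (f : List Bool → ℝ) : Prop :=
  ∃ g : List Bool × ℕ → ℚ, Computable g ∧
    (∀ w t, 0 ≤ g (w, t) ∧ g (w, t) ≤ g (w, t + 1) ∧ (g (w, t) : ℝ) ≤ f w) ∧
    ∀ w, Filter.Tendsto (fun t => (g (w, t) : ℝ)) Filter.atTop (nhds (f w))

/-- An `s`-gale (for the uniform measure): a nonnegative function with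
`2^s d(w) = d(w0) + d(w1)`. -/
def IsGale (s : ℝ) (d : List Bool → ℝ) : Prop :=
  (∀ w, 0 ≤ d w) ∧ ∀ w, (2 : ℝ) ^ s * d w = d (w ++ [false]) + d (w ++ [true])

/-- `d` succeeds strongly on `X`: `liminf_n d(X↾n) = ∞`. -/
def SucceedsStronglyOn (d : List Bool → ℝ) (X : ℕ → Bool) : Prop :=
  Filter.Tendsto (fun n => d (pref X n)) Filter.atTop Filter.atTop

/-- The algorithmic strong dimension of `Γ`: the infimum of all `s ≥ 0` such that some
lower semicomputable `s`-gale succeeds strongly on every `X ∈ Γ`. -/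
noncomputable def aDim (Γ : Set (ℕ → Bool)) : ℝ :=
  sInf {s : ℝ | 0 ≤ s ∧
    ∃ d, IsGale s d ∧ LowerSemicomputable d ∧ ∀ X ∈ Γ, SucceedsStronglyOn d X}

/-! ### Computability of rational numerators, denominators and quotients -/

/-- The code of a rational used by Mathlib's encoding: the pair of the code of the numerator and
the denominator. The `Primcodable` code of `q` is the rank of `ratCode q` among all such codes. -/
def ratCode (q : ℚ) : ℕ := @Encodable.encode ℚ Rat.instEncodable q

/-- Membership in the range of `ratCode`; `(x.unpair.1 + 1) / 2` is the absolute value of the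
integer with code `x.unpair.1`. -/
def IsRatCode (x : ℕ) : Prop := 0 < x.unpair.2 ∧ Nat.Coprime ((x.unpair.1 + 1) / 2) x.unpair.2

theorem natAbs_eq_of_encode (z : ℤ) : z.natAbs = (Encodable.encode z + 1) / 2 := by
  rcases z with n | n
  · have : Encodable.encode (Int.ofNat n) = 2 * n := rfl
    rw [this]; simp; omega
  · have : Encodable.encode (Int.negSucc n) = 2 * n + 1 := rfl
    rw [this]; simp; omega

theorem ratCode_eq (q : ℚ) : ratCode q = Nat.pair (Encodable.encode q.num) q.den := rfl

theorem isRatCode_iff (x : ℕ) : IsRatCode x ↔ x ∈ Set.range ratCode := by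
  constructor
  · rintro ⟨h1, h2⟩
    have hz : Encodable.encode (Denumerable.ofNat ℤ x.unpair.1) = x.unpair.1 :=
      Denumerable.encode_ofNat _
    refine ⟨⟨Denumerable.ofNat ℤ x.unpair.1, x.unpair.2, h1.ne', ?_⟩, ?_⟩
    · rw [natAbs_eq_of_encode, hz]; exact h2
    · rw [ratCode_eq]
      simp only [hz, Nat.pair_unpair]
  · rintro ⟨q, rfl⟩
    rw [IsRatCode, ratCode_eq, Nat.unpair_pair]
    refine ⟨q.pos, ?_⟩
    rw [← natAbs_eq_of_encode]
    exact q.reduced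

theorem ratCode_injective : Function.Injective ratCode := Encodable.encode_injective

theorem primrecPred_isRatCode : PrimrecPred IsRatCode := by
  have hR : PrimrecRel fun (k : ℕ) (p : ℕ × ℕ) => p.1 % k ≠ 0 ∨ p.2 % k ≠ 0 ∨ k = 1 := by
    have hk : Primrec fun z : ℕ × (ℕ × ℕ) => z.1 := Primrec.fst
    have h1 : Primrec fun z : ℕ × (ℕ × ℕ) => z.2.1 := Primrec.fst.comp Primrec.snd
    have h2 : Primrec fun z : ℕ × (ℕ × ℕ) => z.2.2 := Primrec.snd.comp Primrec.snd
    exact ((PrimrecRel.comp Primrec.eq (Primrec.nat_mod.comp h1 hk) (Primrec.const 0)).not).or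
      (((PrimrecRel.comp Primrec.eq (Primrec.nat_mod.comp h2 hk) (Primrec.const 0)).not).or
      (PrimrecRel.comp Primrec.eq hk (Primrec.const 1)))
  have hu1 : Primrec fun x : ℕ => (x.unpair.1 + 1) / 2 :=
    Primrec.nat_div.comp (Primrec.succ.comp (Primrec.fst.comp Primrec.unpair)) (Primrec.const 2)
  have hu2 : Primrec fun x : ℕ => x.unpair.2 := Primrec.snd.comp Primrec.unpair
  have hA := hR.forall_mem_list.comp (Primrec.list_range.comp (Primrec.succ.comp hu2))
    (hu1.pair hu2)
  have hB := (PrimrecRel.comp Primrec.nat_lt (Primrec.const 0) hu2).and hA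
  refine hB.of_eq fun x => ?_
  refine and_congr_right fun hd => ?_
  constructor
  · intro h
    have := h (Nat.gcd ((x.unpair.1 + 1) / 2) x.unpair.2)
      (List.mem_range.2 (Nat.lt_succ_of_le (Nat.gcd_le_right _ hd)))
    rcases this with h | h | h
    · exact absurd (Nat.mod_eq_zero_of_dvd (Nat.gcd_dvd_left _ _)) h
    · exact absurd (Nat.mod_eq_zero_of_dvd (Nat.gcd_dvd_right _ _)) h
    · exact h
  · intro h k _
    by_contra! hc
    exact hc.2.2 (Nat.eq_one_of_dvd_coprimes h (Nat.dvd_of_mod_eq_zero hc.1)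
      (Nat.dvd_of_mod_eq_zero hc.2.1))

noncomputable instance : DecidablePred IsRatCode := Classical.decPred _

/-- The `Primcodable` structure on `ℚ` comes from its `Denumerable` instance, which numbers the
rationals by the rank of their `ratCode`. -/
theorem encode_rat (q : ℚ) :
    @Encodable.encode ℚ Primcodable.toEncodable q = Nat.count IsRatCode (ratCode q) := by
  have h : @Encodable.encode ℚ Primcodable.toEncodable q = (@List.countP ℕ
      (fun x => @decide _ (@Encodable.decidableRangeEncode ℚ Rat.instEncodable x))
      (List.range (ratCode q))) := rfl
  rw [h, Nat.count]
  congr 1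
  funext x
  rw [decide_eq_decide]
  exact (isRatCode_iff x).symm

theorem computable_count_isRatCode : Computable (Nat.count IsRatCode) := by
  have hc : Computable fun x => decide (IsRatCode x) := by
    obtain ⟨_, h⟩ := primrecPred_isRatCode
    exact h.to_comp.of_eq fun x => by congr
  have h := Computable.nat_rec (f := fun n : ℕ => n) (g := fun _ : ℕ => (0 : ℕ))
    (h := fun _ p => bif decide (IsRatCode p.1) then p.2 + 1 else p.2) Computable.id
    (Computable.const 0) (Computable.cond (hc.comp (Computable.fst.comp Computable.snd))
      (Computable.succ.comp (Computable.snd.comp Computable.snd))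
      (Computable.snd.comp Computable.snd))
  refine h.of_eq fun n => ?_
  induction n with
  | zero => simp
  | succ n ih =>
    simp only [Nat.count_succ] at ih ⊢
    rw [ih]
    by_cases hn : IsRatCode n <;> simp [hn]

theorem computablePred_and {α : Type*} [Primcodable α] {p q : α → Prop} (hp : ComputablePred p)
    (hq : ComputablePred q) : ComputablePred fun a => p a ∧ q a := by
  obtain ⟨_, hp⟩ := hp
  obtain ⟨_, hq⟩ := hq
  exact ⟨inferInstance, (Computable.cond hp hq (Computable.const false)).of_eq fun a => by
    by_cases h : p a <;> simp [h]⟩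

theorem computablePred_comp {α β : Type*} [Primcodable α] [Primcodable β] {p : β → Prop}
    (hp : ComputablePred p) {f : α → β} (hf : Computable f) : ComputablePred fun a => p (f a) := by
  obtain ⟨_, hp⟩ := hp
  exact ⟨inferInstance, hp.comp hf⟩

theorem computablePred_natEq {α : Type*} [Primcodable α] {f g : α → ℕ} (hf : Computable f)
    (hg : Computable g) : ComputablePred fun a => f a = g a :=
  computablePred_comp (p := fun z : ℕ × ℕ => z.1 = z.2)
    (PrimrecPred.computablePred (Primrec.eq (α := ℕ))) (hf.pair hg)

/-- `ratCode q` is found by unbounded search for the rational code of the rank that encodes `q`. -/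
theorem computable_ratCode : Computable ratCode := by
  have hP : ComputablePred fun p : ℚ × ℕ => IsRatCode p.2 ∧ Nat.count IsRatCode p.2 =
      @Encodable.encode ℚ Primcodable.toEncodable p.1 :=
    computablePred_and (computablePred_comp primrecPred_isRatCode.computablePred Computable.snd)
      (computablePred_natEq (computable_count_isRatCode.comp Computable.snd)
        (Computable.encode.comp Computable.fst))
  have hex : ∀ q : ℚ, ∃ x, IsRatCode x ∧ Nat.count IsRatCode x =
      @Encodable.encode ℚ Primcodable.toEncodable q :=
    fun q => ⟨ratCode q, (isRatCode_iff _).2 ⟨q, rfl⟩, (encode_rat q).symm⟩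
  classical
  refine (Computable.find (P := fun (q : ℚ) x => IsRatCode x ∧ Nat.count IsRatCode x =
      @Encodable.encode ℚ Primcodable.toEncodable q) hP hex).of_eq fun q => ?_
  have hs := Nat.find_spec (hex q)
  exact Nat.count_injective hs.1 ((isRatCode_iff _).2 ⟨q, rfl⟩) (hs.2.trans (encode_rat q))

/-- The numerator of a nonnegative rational, read off from its code. -/
def ratNum (q : ℚ) : ℕ := (ratCode q).unpair.1 / 2

/-- The denominator of a rational, read off from its code. -/
def ratDen (q : ℚ) : ℕ := (ratCode q).unpair.2

theorem ratDen_eq (q : ℚ) : ratDen q = q.den := by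
  rw [ratDen, ratCode_eq, Nat.unpair_pair]

theorem ratDen_pos (q : ℚ) : 0 < ratDen q := by rw [ratDen_eq]; exact q.pos

theorem ratCode_of_nonneg {q : ℚ} (hq : 0 ≤ q) : (ratCode q).unpair.1 = 2 * q.num.toNat := by
  rw [ratCode_eq, Nat.unpair_pair]
  obtain ⟨n, hn⟩ := Int.eq_ofNat_of_zero_le (Rat.num_nonneg.2 hq)
  rw [hn]; rfl

theorem ratNum_eq {q : ℚ} (hq : 0 ≤ q) : ratNum q = q.num.toNat := by
  rw [ratNum, ratCode_of_nonneg hq]; omega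

theorem ratNum_div_ratDen {q : ℚ} (hq : 0 ≤ q) : (ratNum q : ℚ) / ratDen q = q := by
  rw [ratNum_eq hq, ratDen_eq]
  have : ((q.num.toNat : ℕ) : ℚ) = q.num := by
    rw [← Int.cast_natCast, Int.toNat_of_nonneg (Rat.num_nonneg.2 hq)]
  rw [this, Rat.num_div_den]

theorem computable_ratNum : Computable ratNum :=
  (Primrec.nat_div.to_comp.comp (Computable.fst.comp Computable.unpair) (Computable.const 2)).comp
    computable_ratCode

theorem computable_ratDen : Computable ratDen :=
  (Computable.snd.comp Computable.unpair).comp computable_ratCode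

theorem computable_mul {α : Type*} [Primcodable α] {f g : α → ℕ} (hf : Computable f)
    (hg : Computable g) : Computable fun a => f a * g a :=
  Primrec.nat_mul.to_comp.comp hf hg

theorem computable_add {α : Type*} [Primcodable α] {f g : α → ℕ} (hf : Computable f)
    (hg : Computable g) : Computable fun a => f a + g a :=
  Primrec.nat_add.to_comp.comp hf hg

theorem computable_sub {α : Type*} [Primcodable α] {f g : α → ℕ} (hf : Computable f)
    (hg : Computable g) : Computable fun a => f a - g a :=
  Primrec.nat_sub.to_comp.comp hf hg

theorem computable_max {α : Type*} [Primcodable α] {f g : α → ℕ} (hf : Computable f)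
    (hg : Computable g) : Computable fun a => max (f a) (g a) :=
  Primrec.nat_max.to_comp.comp hf hg

theorem computable_min {α : Type*} [Primcodable α] {f g : α → ℕ} (hf : Computable f)
    (hg : Computable g) : Computable fun a => min (f a) (g a) :=
  Primrec.nat_min.to_comp.comp hf hg

theorem computable_natDiv {α : Type*} [Primcodable α] {f g : α → ℕ} (hf : Computable f)
    (hg : Computable g) : Computable fun a => f a / g a :=
  Primrec.nat_div.to_comp.comp hf hg

theorem computable_natMod {α : Type*} [Primcodable α] {f g : α → ℕ} (hf : Computable f)
    (hg : Computable g) : Computable fun a => f a % g a :=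
  Primrec.nat_mod.to_comp.comp hf hg

theorem computable_div_succ : Computable fun p : ℕ × ℕ => (p.1 : ℚ) / ((p.2 + 1 : ℕ) : ℚ) := by
  -- the code of the quotient is found by searching for a reduced fraction with the same value
  let P : ℕ × ℕ → ℕ → Prop := fun p x => IsRatCode x ∧ x.unpair.1 % 2 = 0 ∧
    x.unpair.1 / 2 * (p.2 + 1) = p.1 * x.unpair.2
  have hx1 : Computable fun z : (ℕ × ℕ) × ℕ => z.2.unpair.1 :=
    Computable.fst.comp (Computable.unpair.comp Computable.snd)
  have hx2 : Computable fun z : (ℕ × ℕ) × ℕ => z.2.unpair.2 :=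
    Computable.snd.comp (Computable.unpair.comp Computable.snd)
  have hP : ComputablePred fun z : (ℕ × ℕ) × ℕ => P z.1 z.2 :=
    computablePred_and (computablePred_comp primrecPred_isRatCode.computablePred Computable.snd)
      (computablePred_and
        (computablePred_natEq (computable_natMod hx1 (Computable.const 2)) (Computable.const 0))
        (computablePred_natEq
          (computable_mul (computable_natDiv hx1 (Computable.const 2))
            (Computable.succ.comp (Computable.snd.comp Computable.fst)))
          (computable_mul (Computable.fst.comp Computable.fst) hx2)))
  have hnn : ∀ p : ℕ × ℕ, (0 : ℚ) ≤ (p.1 : ℚ) / ((p.2 + 1 : ℕ) : ℚ) := fun p => by positivity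
  have hPc : ∀ p : ℕ × ℕ, P p (ratCode ((p.1 : ℚ) / ((p.2 + 1 : ℕ) : ℚ))) := by
    intro p
    refine ⟨(isRatCode_iff _).2 ⟨_, rfl⟩, by rw [ratCode_of_nonneg (hnn p)]; omega, ?_⟩
    have h := ratNum_div_ratDen (hnn p)
    have hd := ratDen_pos ((p.1 : ℚ) / ((p.2 + 1 : ℕ) : ℚ))
    change ratNum _ * (p.2 + 1) = p.1 * ratDen _
    rw [div_eq_div_iff (by positivity) (by positivity)] at h
    exact_mod_cast h
  have huniq : ∀ p x, P p x → x = ratCode ((p.1 : ℚ) / ((p.2 + 1 : ℕ) : ℚ)) := by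
    rintro p x ⟨h1, h2, h3⟩
    obtain ⟨q, rfl⟩ := (isRatCode_iff x).1 h1
    congr 1
    have hq : 0 ≤ q := by
      rw [← Rat.num_nonneg]
      rw [ratCode_eq, Nat.unpair_pair] at h2
      rcases hz : q.num with n | n
      · simp
      · rw [hz] at h2
        have : Encodable.encode (Int.negSucc n) = 2 * n + 1 := rfl
        simp only [this] at h2
        omega
    rw [← ratNum_div_ratDen hq, div_eq_div_iff (by have := ratDen_pos q; positivity)
      (by positivity)]
    exact_mod_cast h3
  have hex : ∀ p, ∃ x, P p x := fun p => ⟨_, hPc p⟩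
  classical
  rw [← Computable.encode_iff]
  refine (computable_count_isRatCode.comp (Computable.find (P := P) hP hex)).of_eq fun p => ?_
  rw [huniq p _ (Nat.find_spec (hex p)), encode_rat]

theorem computable_ratDiv {α : Type*} [Primcodable α] {f g : α → ℕ} (hf : Computable f)
    (hg : Computable g) : Computable fun a => (f a : ℚ) / (g a : ℚ) := by
  refine (computable_div_succ.comp (Computable.pair
    (computable_mul hf (computable_min hg (Computable.const 1)))
    (Computable.pred.comp hg))).of_eq fun a => ?_
  rcases Nat.eq_zero_or_pos (g a) with h | h
  · simp [h]
  · have h1 : min (g a) 1 = 1 := by omega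
    have h2 : (g a).pred + 1 = g a := Nat.succ_pred_eq_of_pos h
    simp only [h1, h2, mul_one]

theorem computable_pow {α : Type*} [Primcodable α] {f g : α → ℕ} (hf : Computable f)
    (hg : Computable g) : Computable fun a => f a ^ g a := by
  refine (Computable.nat_rec (f := g) (g := fun _ => 1) (h := fun a p => p.2 * f a) hg
    (Computable.const 1) (computable_mul (Computable.snd.comp Computable.snd)
      (hf.comp Computable.fst))).of_eq fun a => ?_
  induction g a with
  | zero => simp
  | succ n ih => simp only [pow_succ, ← ih]

/-! ### Prefixes, cylinders and yes-counts -/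

@[simp] theorem length_pref (X : ℕ → Bool) (n : ℕ) : (pref X n).length = n := by simp [pref]

theorem pref_succ (X : ℕ → Bool) (n : ℕ) : pref X (n + 1) = pref X n ++ [X n] := by
  simp [pref, List.range_succ]

theorem take_pref (X : ℕ → Bool) {i n : ℕ} (h : i ≤ n) : (pref X n).take i = pref X i := by
  simp [pref, ← List.map_take, List.take_range, h]

theorem mem_cylinder_iff {w : List Bool} {Y : ℕ → Bool} : Y ∈ cylinder w ↔ pref Y w.length = w :=
  Iff.rfl

theorem cylinder_nil : cylinder [] = Set.univ := by
  ext Y; simp [mem_cylinder_iff, pref]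

/-- The number of prefixes of `w`, including the empty string and `w`, on which `l` says yes. -/
def yesCount (l : List Bool → Bool) (w : List Bool) : ℕ :=
  ((Finset.range (w.length + 1)).filter fun i => l (w.take i) = true).card

theorem pathAvg_eq (l : List Bool → Bool) (w : List Bool) :
    pathAvg l w = yesCount l w / w.length := by
  rw [pathAvg, yesCount, Finset.sum_boole]

theorem yesCount_le (l : List Bool → Bool) (w : List Bool) : yesCount l w ≤ w.length + 1 := by
  rw [yesCount]
  simpa using Finset.card_filter_le (Finset.range (w.length + 1)) fun i => l (w.take i) = true

theorem yesCount_take_le (l : List Bool → Bool) (w : List Bool) (i : ℕ) :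
    yesCount l (w.take i) ≤ yesCount l w := by
  refine Finset.card_le_card fun j hj => ?_
  simp only [Finset.mem_filter, Finset.mem_range, List.length_take] at hj ⊢
  obtain ⟨h1, h2⟩ := hj
  refine ⟨by omega, ?_⟩
  rwa [List.take_take, min_eq_left (by omega)] at h2

theorem pathAvg_nonneg (l : List Bool → Bool) (w : List Bool) : 0 ≤ pathAvg l w := by
  rw [pathAvg_eq]; positivity

theorem pathAvg_le_two (l : List Bool → Bool) (w : List Bool) : pathAvg l w ≤ 2 := by
  rw [pathAvg_eq]
  rcases Nat.eq_zero_or_pos w.length with h | h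
  · simp [h]
  · rw [div_le_iff₀ (by exact_mod_cast h)]
    have := yesCount_le l w
    have h2 : yesCount l w ≤ 2 * w.length := by omega
    exact_mod_cast h2

theorem le_liminf_pathAvg {l : List Bool → Bool} {X : ℕ → Bool} {a : ℝ}
    (h : ∀ b < a, ∀ᶠ n in atTop, b ≤ pathAvg l (pref X n)) :
    a ≤ liminf (fun n => pathAvg l (pref X n)) atTop := by
  refine le_of_forall_lt fun b hb => ?_
  obtain ⟨c, hbc, hca⟩ := exists_between hb
  refine lt_of_lt_of_le hbc (le_liminf_of_le ?_ (h c hca))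
  exact (isBoundedUnder_of ⟨2, fun _ => pathAvg_le_two l _⟩).isCoboundedUnder_ge

theorem eventually_lt_pathAvg {l : List Bool → Bool} {X : ℕ → Bool} {a b : ℝ}
    (h : a ≤ liminf (fun n => pathAvg l (pref X n)) atTop) (hb : b < a) :
    ∀ᶠ n in atTop, b < pathAvg l (pref X n) :=
  eventually_lt_of_lt_liminf (lt_of_lt_of_le hb h)
    (isBoundedUnder_of ⟨0, fun _ => pathAvg_nonneg l _⟩)

theorem le_encard_iff (l : List Bool → Bool) (Y : ℕ → Bool) (n : ℕ) :
    (n : ℕ∞) ≤ {m : ℕ | l (pref Y m) = true}.encard ↔ ∃ N, n ≤ yesCount l (pref Y N) := by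
  have key : ∀ N, ((Finset.range (N + 1)).filter fun i => l ((pref Y N).take i) = true) =
      (Finset.range (N + 1)).filter fun i => l (pref Y i) = true := fun N =>
    Finset.filter_congr fun i hi => by
      rw [take_pref Y (Nat.lt_succ_iff.1 (Finset.mem_range.1 hi))]
  constructor
  · intro h
    obtain ⟨t, ht, htc⟩ := Set.exists_subset_encard_eq h
    have hfin : t.Finite := Set.finite_of_encard_eq_coe htc
    obtain ⟨N, hN⟩ := hfin.bddAbove
    refine ⟨N, ?_⟩
    rw [yesCount, length_pref, key]
    have hc : hfin.toFinset.card = n := by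
      rw [hfin.encard_eq_coe_toFinset_card] at htc
      exact_mod_cast htc
    rw [← hc]
    refine Finset.card_le_card fun i hi => ?_
    have hi' : i ∈ t := hfin.mem_toFinset.1 hi
    simp only [Finset.mem_filter, Finset.mem_range]
    exact ⟨Nat.lt_succ_of_le (hN hi'), ht hi'⟩
  · rintro ⟨N, hN⟩
    rw [yesCount, length_pref, key] at hN
    refine le_trans (Nat.cast_le.2 hN) ?_
    rw [← Set.encard_coe_eq_coe_finsetCard]
    exact Set.encard_le_encard fun i hi => by simpa using (Finset.mem_filter.1 hi).2

/-! ### From gales to learning functions -/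

/-- Ville's maximal inequality for nonnegative supermartingales, conditioned on the cylinder at
`w` and up to `N` further bits. -/
theorem ville_cylinder {μ : Measure (ℕ → Bool)}
    (hμ : ∀ w : List Bool, μ (cylinder w) = (2 ^ w.length)⁻¹) {m : List Bool → ℝ}
    (hm : ∀ w, 0 ≤ m w) (hs : ∀ w, m (w ++ [false]) + m (w ++ [true]) ≤ 2 * m w) {a : ℝ}
    (ha : 0 < a) (N : ℕ) (w : List Bool) :
    μ ({Y | ∃ i ≤ N, a < m (pref Y (w.length + i))} ∩ cylinder w) ≤
      ENNReal.ofReal (m w / (a * 2 ^ w.length)) := by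
  have hbig : ∀ w, a < m w → μ (cylinder w) ≤ ENNReal.ofReal (m w / (a * 2 ^ w.length)) := by
    intro w h
    rw [hμ, ← ENNReal.ofReal_ofNat, ← ENNReal.ofReal_pow (by norm_num),
      ← ENNReal.ofReal_inv_of_pos (by positivity)]
    refine ENNReal.ofReal_le_ofReal ?_
    rw [inv_eq_one_div, div_le_div_iff₀ (by positivity) (by positivity), one_mul]
    gcongr
  induction N generalizing w with
  | zero =>
    by_cases h : a < m w
    · exact (measure_mono Set.inter_subset_right).trans (hbig w h)
    · refine le_of_eq_of_le ?_ (bot_le (a := ENNReal.ofReal (m w / (a * 2 ^ w.length))))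
      refine (congrArg μ ?_).trans (measure_empty (μ := μ))
      ext Y
      simp only [Set.mem_inter_iff, Set.mem_ofPred_eq, Set.mem_empty_iff_false, iff_false, not_and]
      rintro ⟨i, hi, hY⟩ hw
      obtain rfl : i = 0 := by omega
      rw [add_zero, mem_cylinder_iff.1 hw] at hY
      exact h hY
  | succ N ih =>
    by_cases h : a < m w
    · exact (measure_mono Set.inter_subset_right).trans (hbig w h)
    · have hsub : ({Y | ∃ i ≤ N + 1, a < m (pref Y (w.length + i))} ∩ cylinder w) ⊆
          ({Y | ∃ i ≤ N, a < m (pref Y ((w ++ [false]).length + i))} ∩ cylinder (w ++ [false])) ∪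
          ({Y | ∃ i ≤ N, a < m (pref Y ((w ++ [true]).length + i))} ∩ cylinder (w ++ [true])) := by
        rintro Y ⟨⟨i, hi, hY⟩, hw⟩
        rw [mem_cylinder_iff] at hw
        rcases i with _ | i
        · rw [add_zero, hw] at hY
          exact absurd hY h
        · have hi' : i ≤ N := by omega
          have e : w.length + (i + 1) = w.length + 1 + i := by omega
          rw [e] at hY
          cases hb : Y w.length with
          | false =>
            left
            refine ⟨⟨i, hi', by simpa using hY⟩, ?_⟩
            simp [mem_cylinder_iff, pref_succ, hw, hb]
          | true =>
            right
            refine ⟨⟨i, hi', by simpa using hY⟩, ?_⟩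
            simp [mem_cylinder_iff, pref_succ, hw, hb]
      refine (measure_mono hsub).trans ((measure_union_le _ _).trans
        ((add_le_add (ih _) (ih _)).trans ?_))
      have h0 := hm (w ++ [false])
      have h1 := hm (w ++ [true])
      rw [← ENNReal.ofReal_add (by positivity) (by positivity)]
      refine ENNReal.ofReal_le_ofReal ?_
      simp only [List.length_append, List.length_singleton, ← add_div]
      rw [div_le_div_iff₀ (by positivity) (by positivity), pow_succ]
      have hsw := hs w
      have hp : 0 < a * 2 ^ w.length := by positivity
      nlinarith

theorem ville {μ : Measure (ℕ → Bool)}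
    (hμ : ∀ w : List Bool, μ (cylinder w) = (2 ^ w.length)⁻¹) {m : List Bool → ℝ}
    (hm : ∀ w, 0 ≤ m w) (hs : ∀ w, m (w ++ [false]) + m (w ++ [true]) ≤ 2 * m w) {a : ℝ}
    (ha : 0 < a) : μ {Y | ∃ i, a < m (pref Y i)} ≤ ENNReal.ofReal (m [] / a) := by
  have hU : {Y | ∃ i, a < m (pref Y i)} = ⋃ N : ℕ, {Y | ∃ i ≤ N, a < m (pref Y i)} := by
    ext Y
    simp only [Set.mem_ofPred_eq, Set.mem_iUnion]
    exact ⟨fun ⟨i, hi⟩ => ⟨i, i, le_rfl, hi⟩, fun ⟨_, i, _, hi⟩ => ⟨i, hi⟩⟩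
  have hmono : Monotone fun N : ℕ => {Y : ℕ → Bool | ∃ i ≤ N, a < m (pref Y i)} :=
    fun N M hNM Y ⟨i, hi, h⟩ => ⟨i, hi.trans hNM, h⟩
  rw [hU, hmono.measure_iUnion]
  refine iSup_le fun N => ?_
  simpa [cylinder_nil] using ville_cylinder hμ hm hs ha N []

/-- The yes-count, after `n` bits of `w`, of the learning function obtained from `m`: it is
increased from `k` to `k + 1` at a prefix where the value of `m` exceeds `2 ^ (k + 1)`. -/
noncomputable def learnCount (m : List Bool → ℝ) (w : List Bool) : ℕ → ℕ
  | 0 => 0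
  | n + 1 => learnCount m w n +
      if (2 : ℝ) ^ (learnCount m w n + 1) < m (w.take (n + 1)) then 1 else 0

open Classical in
/-- The learning function that says yes at `w` when the capital `m w` exceeds `2 ^ (k + 1)`, where
`k` is the number of yes answers given on the proper prefixes of `w`. -/
noncomputable def learner (m : List Bool → ℝ) (w : List Bool) : Bool :=
  decide (w ≠ [] ∧ (2 : ℝ) ^ (learnCount m w (w.length - 1) + 1) < m w)

theorem learnCount_take (m : List Bool → ℝ) (w : List Bool) {n k : ℕ} (h : n ≤ k) :
    learnCount m (w.take k) n = learnCount m w n := by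
  induction n with
  | zero => rfl
  | succ n ih =>
    rw [learnCount, learnCount, ih (by omega), List.take_take, min_eq_left h]

theorem learner_take (m : List Bool → ℝ) (w : List Bool) {n : ℕ} (h : n + 1 ≤ w.length) :
    learner m (w.take (n + 1)) = true ↔
      (2 : ℝ) ^ (learnCount m w n + 1) < m (w.take (n + 1)) := by
  have hl : (w.take (n + 1)).length = n + 1 := by simp; omega
  have hne : w.take (n + 1) ≠ [] := fun h0 => by simp [h0] at hl
  simp only [learner, hl, Nat.add_sub_cancel, learnCount_take m w (Nat.le_succ n),
    decide_eq_true_eq]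
  simp [hne]

theorem card_learner (m : List Bool → ℝ) (w : List Bool) {n : ℕ} (h : n ≤ w.length) :
    ((Finset.range (n + 1)).filter fun i => learner m (w.take i) = true).card =
      learnCount m w n := by
  induction n with
  | zero => simp [learner, learnCount]
  | succ n ih =>
    rw [Finset.range_add_one, Finset.filter_insert, learnCount, ← ih (by omega)]
    have e := learner_take m w h
    rw [← ih (by omega)] at e
    split_ifs with h1 h2 h2
    · rw [Finset.card_insert_of_notMem (by simp)]
    · exact absurd (e.1 h1) h2
    · exact absurd (e.2 h2) h1
    · simp

theorem yesCount_learner (m : List Bool → ℝ) (w : List Bool) :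
    yesCount (learner m) w = learnCount m w w.length := card_learner m w le_rfl

/-- The capital at most doubles with each bit, so a single yes answer per bit is enough for the
yes-count to keep up with `log₂ m`. -/
theorem le_two_pow_learnCount {m : List Bool → ℝ} (h0 : m [] ≤ 2)
    (hm : ∀ w b, m (w ++ [b]) ≤ 2 * m w) (w : List Bool) {n : ℕ} (h : n ≤ w.length) :
    m (w.take n) ≤ 2 ^ (learnCount m w n + 1) := by
  induction n with
  | zero => simpa [learnCount] using h0
  | succ n ih =>
    rw [learnCount]
    split_ifs with h1
    · have : w.take (n + 1) = w.take n ++ [w[n]] := by simp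
      rw [this]
      refine (hm _ _).trans ?_
      rw [pow_succ, mul_comm]
      exact mul_le_mul_of_nonneg_right (ih (by omega)) (by norm_num)
    · simpa using h1

theorem exists_of_le_learnCount {m : List Bool → ℝ} (w : List Bool) {n N : ℕ} (hn : 0 < n)
    (h : n ≤ learnCount m w N) : ∃ i ≤ N, (2 : ℝ) ^ n < m (w.take i) := by
  induction N with
  | zero => simp [learnCount] at h; omega
  | succ N ih =>
    by_cases hN : n ≤ learnCount m w N
    · obtain ⟨i, hi, h⟩ := ih hN
      exact ⟨i, by omega, h⟩
    · rw [learnCount] at h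
      split_ifs at h with h1
      · have : n = learnCount m w N + 1 := by omega
        exact ⟨N + 1, le_rfl, this ▸ h1⟩
      · omega

theorem measureCondition_learner {μ : Measure (ℕ → Bool)}
    (hμ : ∀ w : List Bool, μ (cylinder w) = (2 ^ w.length)⁻¹) {m : List Bool → ℝ}
    (hm : ∀ w, 0 ≤ m w) (hs : ∀ w, m (w ++ [false]) + m (w ++ [true]) ≤ 2 * m w)
    (h0 : m [] ≤ 1) : MeasureCondition μ (learner m) := by
  intro n
  rcases Nat.eq_zero_or_pos n with rfl | hn
  · refine (measure_mono (Set.subset_univ _)).trans ?_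
    rw [← cylinder_nil, hμ]; simp
  · have hsub : {Y | (n : ℕ∞) ≤ {k : ℕ | learner m (pref Y k) = true}.encard} ⊆
        {Y | ∃ i, (2 : ℝ) ^ n < m (pref Y i)} := by
      intro Y hY
      obtain ⟨N, hN⟩ := (le_encard_iff _ Y n).1 hY
      rw [yesCount_learner, length_pref] at hN
      obtain ⟨i, hi, h⟩ := exists_of_le_learnCount _ hn hN
      rw [take_pref Y hi] at h
      exact ⟨i, h⟩
    refine (measure_mono hsub).trans ((ville hμ hm hs (by positivity)).trans ?_)
    rw [← ENNReal.ofReal_ofNat, ← ENNReal.ofReal_pow (by norm_num),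
        ← ENNReal.ofReal_inv_of_pos (by positivity)]
    refine ENNReal.ofReal_le_ofReal ?_
    rw [inv_eq_one_div]
    gcongr

theorem learnCount_mono {m m' : List Bool → ℝ} (h : ∀ w, m w ≤ m' w) (w : List Bool) (n : ℕ) :
    learnCount m w n ≤ learnCount m' w n := by
  induction n with
  | zero => rfl
  | succ n ih =>
    rw [learnCount, learnCount]
    rcases ih.lt_or_eq with hlt | heq
    · split_ifs <;> omega
    · rw [← heq]
      have := h (w.take (n + 1))
      split_ifs with h1 h2
      · rfl
      · exact absurd (h1.trans_le this) h2
      · omega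
      · rfl

/-- Approximating `m` from below, the strict threshold tests along `w` are eventually decided as for
`m` itself. -/
theorem eventually_learnCount_eq {m : List Bool → ℝ} {M : ℕ → List Bool → ℝ}
    (hle : ∀ t w, M t w ≤ m w) (hlim : ∀ w, Tendsto (fun t => M t w) atTop (nhds (m w)))
    (w : List Bool) (n : ℕ) : ∀ᶠ t in atTop, learnCount (M t) w n = learnCount m w n := by
  induction n with
  | zero => exact Eventually.of_forall fun t => rfl
  | succ n ih =>
    by_cases h : (2 : ℝ) ^ (learnCount m w n + 1) < m (w.take (n + 1))
    · filter_upwards [ih, (hlim (w.take (n + 1))).eventually (lt_mem_nhds h)] with t h1 h2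
      rw [learnCount, learnCount, h1, if_pos h2, if_pos h]
    · filter_upwards [ih] with t h1
      rw [learnCount, learnCount, h1, if_neg h,
        if_neg fun h2 => h (h2.trans_le (hle t _))]

theorem computable_learnCount {g : List Bool × ℕ → ℚ} (hg : Computable g) (h0 : ∀ p, 0 ≤ g p) :
    Computable fun p : List Bool × ℕ =>
      learnCount (fun w => (g (w, p.2) : ℝ)) p.1 p.1.length := by
  -- at an argument `z = ((w, t), (n, k))`, the rational `g (w.take (n + 1), t)`
  have hq : Computable fun z : (List Bool × ℕ) × (ℕ × ℕ) => g (z.1.1.take (z.2.1 + 1), z.1.2) := by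
    refine hg.comp (Computable.pair ?_ (Computable.snd.comp Computable.fst))
    exact Primrec.list_take.to_comp.comp
      (Computable.succ.comp (Computable.fst.comp Computable.snd))
      (Computable.fst.comp Computable.fst)
  have hk : Computable fun z : (List Bool × ℕ) × (ℕ × ℕ) => z.2.2 :=
    Computable.snd.comp Computable.snd
  have hlt : Computable fun z : (List Bool × ℕ) × (ℕ × ℕ) =>
      decide (2 ^ (z.2.2 + 1) * ratDen (g (z.1.1.take (z.2.1 + 1), z.1.2)) <
        ratNum (g (z.1.1.take (z.2.1 + 1), z.1.2))) :=
    (Primrec.nat_lt.decide.to_comp).comp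
      (computable_mul (computable_pow (Computable.const 2) (Computable.succ.comp hk))
        (computable_ratDen.comp hq)) (computable_ratNum.comp hq)
  have h := Computable.nat_rec (f := fun p : List Bool × ℕ => p.1.length)
    (g := fun _ => (0 : ℕ))
    (h := fun p z => bif decide (2 ^ (z.2 + 1) * ratDen (g (p.1.take (z.1 + 1), p.2)) <
        ratNum (g (p.1.take (z.1 + 1), p.2))) then z.2 + 1 else z.2)
    (Computable.list_length.comp Computable.fst) (Computable.const 0)
    (Computable.cond hlt (Computable.succ.comp hk) hk)
  refine h.of_eq fun p => ?_
  induction p.1.length with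
  | zero => rfl
  | succ n ih =>
    simp only [ih, learnCount]
    have e : ∀ k, 2 ^ (k + 1) * ratDen (g (p.1.take (n + 1), p.2)) <
        ratNum (g (p.1.take (n + 1), p.2)) ↔
        (2 : ℝ) ^ (k + 1) < (g (p.1.take (n + 1), p.2) : ℝ) := by
      intro k
      have h1 := ratNum_div_ratDen (h0 (p.1.take (n + 1), p.2))
      have h2 := ratDen_pos (g (p.1.take (n + 1), p.2))
      rw [show (2 : ℝ) ^ (k + 1) = (((2 : ℚ) ^ (k + 1) : ℚ) : ℝ) by push_cast; rfl, Rat.cast_lt]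
      conv_rhs => rw [← h1]
      rw [lt_div_iff₀ (by exact_mod_cast h2)]
      exact_mod_cast Iff.rfl
    simp only [e]
    split_ifs with h <;> simp [h]

theorem lowerSemicomputable_learner {m : List Bool → ℝ} (hm : LowerSemicomputable m) :
    LowerSemicomputable (pathAvg (learner m)) := by
  obtain ⟨g, hg, hb, hlim⟩ := hm
  have e : ∀ w, pathAvg (learner m) w = learnCount m w w.length / w.length := fun w => by
    rw [pathAvg_eq, yesCount_learner]
  refine ⟨fun p => (learnCount (fun w => (g (w, p.2) : ℝ)) p.1 p.1.length : ℚ) /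
    (p.1.length : ℚ), computable_ratDiv (computable_learnCount hg fun p => (hb p.1 p.2).1)
      (Computable.list_length.comp Computable.fst), fun w t => ⟨by positivity, ?_, ?_⟩,
      fun w => ?_⟩
  · have := learnCount_mono (m := fun w => (g (w, t) : ℝ)) (m' := fun w => (g (w, t + 1) : ℝ))
      (fun w => by exact_mod_cast (hb w t).2.1) w w.length
    simp only
    gcongr
  · rw [e]
    have := learnCount_mono (m := fun w => (g (w, t) : ℝ)) (m' := m)
      (fun w => (hb w t).2.2) w w.length
    push_cast
    gcongr
  · rw [e]
    refine tendsto_const_nhds.congr' ?_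
    filter_upwards [eventually_learnCount_eq (M := fun t w => (g (w, t) : ℝ))
      (fun t w => (hb w t).2.2) hlim w w.length] with t ht
    simp only [ht]
    push_cast; rfl

/-- Rescaling by nonnegative rationals `a / b` and `(e / f) ^ |w|` preserves lower
semicomputability. -/
theorem LowerSemicomputable.scale {d : List Bool → ℝ} (hd : LowerSemicomputable d)
    (a b e f : ℕ) :
    LowerSemicomputable fun w => (a / b : ℝ) * (e / f : ℝ) ^ w.length * d w := by
  obtain ⟨g, hg, hb, hlim⟩ := hd
  have hlen : Computable fun p : List Bool × ℕ => p.1.length :=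
    Computable.list_length.comp Computable.fst
  refine ⟨fun p => (a / b : ℚ) * (e / f : ℚ) ^ p.1.length * g p, ?_, fun w t => ⟨?_, ?_, ?_⟩,
    fun w => ?_⟩
  · refine (computable_ratDiv
      (computable_mul (computable_mul (Computable.const a)
        (computable_pow (Computable.const e) hlen)) (computable_ratNum.comp hg))
      (computable_mul (computable_mul (Computable.const b)
        (computable_pow (Computable.const f) hlen)) (computable_ratDen.comp hg))).of_eq fun p => ?_
    conv_rhs => rw [← ratNum_div_ratDen (hb p.1 p.2).1]
    push_cast
    rw [div_pow]
    simp only [div_mul_div_comm]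
  · have := (hb w t).1
    positivity
  · have := (hb w t).2.1
    simp only
    gcongr
  · have := (hb w t).2.2
    push_cast
    gcongr
  · push_cast
    exact (hlim w).const_mul _

/-- A rational number `e / f = 2 ^ s'` with `s < s' ≤ s + ε`. -/
theorem exists_rat_rpow (s : ℝ) {ε : ℝ} (hε : 0 < ε) :
    ∃ (s' : ℝ) (e f : ℕ), s < s' ∧ s' ≤ s + ε ∧ 0 < e ∧ 0 < f ∧
      (2 : ℝ) ^ s' = (e / f : ℝ) := by
  have h1 : (2 : ℝ) ^ s < 2 ^ (s + ε) := Real.rpow_lt_rpow_of_exponent_lt (by norm_num) (by linarith)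
  obtain ⟨q, hq1, hq2⟩ := exists_rat_btwn h1
  have hq0 : (0 : ℝ) < q := lt_trans (by positivity) hq1
  have hq0' : 0 < q := by exact_mod_cast hq0
  have hl : (2 : ℝ) ^ (Real.logb 2 q) = q := Real.rpow_logb (by norm_num) (by norm_num) hq0
  refine ⟨Real.logb 2 q, q.num.toNat, q.den, ?_, ?_, ?_, q.pos, ?_⟩
  · rwa [Real.lt_logb_iff_rpow_lt (by norm_num) hq0]
  · exact ((Real.logb_lt_iff_lt_rpow (by norm_num) hq0).2 hq2).le
  · have := Rat.num_pos.2 hq0'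
    omega
  · rw [hl]
    have : ((q.num.toNat : ℕ) : ℚ) = q.num := by
      rw [← Int.cast_natCast, Int.toNat_of_nonneg (Rat.num_nonneg.2 hq0'.le)]
    conv_lhs => rw [← Rat.num_div_den q, ← this]
    push_cast; rfl

/-- A lower semicomputable `s`-gale succeeding strongly on `Γ` yields a learner for `Γ` at some
`s' ≤ s + ε`. The slack is used to make `2 ^ s'` rational, so that rescaling the gale to a
supermartingale keeps it lower semicomputable. -/
theorem learnable_of_gale {μ : Measure (ℕ → Bool)}
    (hμ : ∀ w : List Bool, μ (cylinder w) = (2 ^ w.length)⁻¹) {Γ : Set (ℕ → Bool)} {s : ℝ}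
    (hs : 0 ≤ s) {d : List Bool → ℝ} (hd : IsGale s d) (hlsc : LowerSemicomputable d)
    (hΓ : ∀ X ∈ Γ, SucceedsStronglyOn d X) {ε : ℝ} (hε : 0 < ε) :
    ∃ s', s' ≤ s + ε ∧ 0 ≤ s' ∧ ∃ l : List Bool → Bool,
      LowerSemicomputable (pathAvg l) ∧ ∀ X ∈ Γ, StronglySLearns μ l s' X := by
  obtain ⟨s', e, f, hss, hs', he, hf, hq⟩ := exists_rat_rpow s hε
  obtain ⟨k, hk⟩ := exists_nat_ge (d [])
  -- the supermartingale `m w = (k + 1)⁻¹ * 2 ^ ((1 - s') * |w|) * d w`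
  set m : List Bool → ℝ := fun w =>
    ((1 : ℕ) / (k + 1 : ℕ) : ℝ) * ((2 * f : ℕ) / (e : ℕ) : ℝ) ^ w.length * d w with hmdef
  have hf' : (0 : ℝ) < f := by exact_mod_cast hf
  have he' : (0 : ℝ) < e := by exact_mod_cast he
  have hm : ∀ w, 0 ≤ m w := fun w => by have := hd.1 w; positivity
  have hsup : ∀ w, m (w ++ [false]) + m (w ++ [true]) ≤ 2 * m w := by
    intro w
    have h1 : (2 : ℝ) ^ s ≤ e / f := by
      rw [← hq]; exact Real.rpow_le_rpow_of_exponent_le (by norm_num) hss.le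
    have h2 : d (w ++ [false]) + d (w ++ [true]) ≤ (e / f : ℝ) * d w := by
      rw [← hd.2 w]; exact mul_le_mul_of_nonneg_right h1 (hd.1 w)
    calc m (w ++ [false]) + m (w ++ [true])
        = ((1 : ℕ) / (k + 1 : ℕ) : ℝ) * ((2 * f : ℕ) / (e : ℕ) : ℝ) ^ (w.length + 1) *
          (d (w ++ [false]) + d (w ++ [true])) := by
          simp only [hmdef, List.length_append, List.length_singleton]; ring
      _ ≤ ((1 : ℕ) / (k + 1 : ℕ) : ℝ) * ((2 * f : ℕ) / (e : ℕ) : ℝ) ^ (w.length + 1) *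
          ((e / f : ℝ) * d w) := by gcongr
      _ = 2 * m w := by
          simp only [hmdef, pow_succ]; push_cast; field_simp
  have hdbl : ∀ w b, m (w ++ [b]) ≤ 2 * m w := by
    intro w b
    have h0 := hm (w ++ [false])
    have h1 := hm (w ++ [true])
    have := hsup w
    cases b <;> linarith
  have hm0 : m [] ≤ 1 := by
    simp only [hmdef, List.length_nil, pow_zero, mul_one]
    push_cast
    rw [div_mul_eq_mul_div, one_mul, div_le_one (by positivity)]
    linarith
  refine ⟨s', hs', by linarith, learner m, ?_, fun X hX => ⟨?_, ?_⟩⟩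
  · exact lowerSemicomputable_learner (hlsc.scale _ _ _ _)
  · exact measureCondition_learner hμ hm hsup hm0
  · refine le_liminf_pathAvg fun b hb => ?_
    set c : ℝ := Real.logb 2 (k + 1 : ℝ) + 1
    have hev : ∀ᶠ n : ℕ in atTop, c ≤ (1 - s' - b) * (n : ℝ) :=
      (tendsto_natCast_atTop_atTop.const_mul_atTop (by linarith)).eventually_ge_atTop c
    filter_upwards [(hΓ X hX).eventually_ge_atTop 1, hev, eventually_gt_atTop 0] with n h1 h2 h3
    have hL := le_two_pow_learnCount (hm0.trans (by norm_num)) hdbl (pref X n) (n := n) (by simp)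
    rw [take_pref X le_rfl] at hL
    rw [pathAvg_eq, yesCount_learner, length_pref, le_div_iff₀ (by exact_mod_cast h3)]
    have h4 : ((2 * f : ℕ) / (e : ℕ) : ℝ) = (2 : ℝ) ^ (1 - s') := by
      rw [Real.rpow_sub (by norm_num), hq, Real.rpow_one]; push_cast; field_simp
    have h5 : (2 : ℝ) ^ ((1 - s') * n) ≤ (2 : ℝ) ^ (Real.logb 2 (k + 1 : ℝ) +
        ((learnCount m (pref X n) n : ℝ) + 1)) := by
      rw [Real.rpow_add (by norm_num), Real.rpow_logb (by norm_num) (by norm_num) (by positivity),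
        Real.rpow_mul (by norm_num), Real.rpow_natCast, ← h4]
      have h6 : (2 : ℝ) ^ ((learnCount m (pref X n) n : ℝ) + 1) =
          2 ^ (learnCount m (pref X n) n + 1) := by
        rw [← Real.rpow_natCast]; push_cast; rfl
      rw [h6]
      refine le_trans ?_ (mul_le_mul_of_nonneg_left hL (by positivity))
      simp only [hmdef, length_pref]
      have hx : ((k : ℝ) + 1) * (((1 : ℕ) / (k + 1 : ℕ) : ℝ) *
          ((2 * f : ℕ) / (e : ℕ) : ℝ) ^ n * d (pref X n)) =
          ((2 * f : ℕ) / (e : ℕ) : ℝ) ^ n * d (pref X n) := by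
        push_cast; field_simp
      rw [hx]
      exact le_mul_of_one_le_right (by positivity) h1
    rw [Real.rpow_le_rpow_left_iff (by norm_num)] at h5
    have hc : c = Real.logb 2 (k + 1 : ℝ) + 1 := rfl
    nlinarith

/-! ### Sums over the extensions of a string -/

/-- The sum of `F` over all extensions of `w` by exactly `k` bits. -/
def strSum {R : Type*} [Add R] (F : List Bool → R) : ℕ → List Bool → R
  | 0, w => F w
  | k + 1, w => strSum F k (w ++ [false]) + strSum F k (w ++ [true])

theorem strSum_mono {F G : List Bool → ℝ} {k : ℕ} {w : List Bool}
    (h : ∀ v : List Bool, v.length = w.length + k → F v ≤ G v) :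
    strSum F k w ≤ strSum G k w := by
  induction k generalizing w with
  | zero => exact h w rfl
  | succ k ih =>
    refine add_le_add (ih fun v hv => h v ?_) (ih fun v hv => h v ?_) <;>
    · simp only [List.length_append, List.length_singleton] at hv; omega

theorem strSum_nonneg {F : List Bool → ℝ} (h : ∀ v, 0 ≤ F v) (k : ℕ) (w : List Bool) :
    0 ≤ strSum F k w := by
  induction k generalizing w with
  | zero => exact h w
  | succ k ih => exact add_nonneg (ih _) (ih _)

theorem strSum_finset_sum (I : Finset ℕ) (c : ℕ → ℝ) (F : ℕ → List Bool → ℝ) (k : ℕ)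
    (w : List Bool) :
    strSum (fun v => ∑ n ∈ I, c n * F n v) k w = ∑ n ∈ I, c n * strSum (F n) k w := by
  induction k generalizing w with
  | zero => rfl
  | succ k ih => simp only [strSum, ih, mul_add, Finset.sum_add_distrib]

theorem strSum_div (F : List Bool → ℝ) (c : ℝ) (k : ℕ) (w : List Bool) :
    strSum (fun v => F v / c) k w = strSum F k w / c := by
  induction k generalizing w with
  | zero => rfl
  | succ k ih => simp only [strSum, ih, add_div]

theorem cast_strSum (F : List Bool → ℕ) (k : ℕ) (w : List Bool) :
    ((strSum F k w : ℕ) : ℝ) = strSum (fun v => (F v : ℝ)) k w := by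
  induction k generalizing w with
  | zero => rfl
  | succ k ih => simp only [strSum, Nat.cast_add, ih]

theorem two_mul_strSum_le {F G : List Bool → ℝ} (h : ∀ v b, F v ≤ G (v ++ [b])) (k : ℕ)
    (w : List Bool) : 2 * strSum F k w ≤ strSum G (k + 1) w := by
  induction k generalizing w with
  | zero =>
    have h0 := h w false
    have h1 := h w true
    simp only [strSum]; linarith
  | succ k ih =>
    have h0 := ih (w ++ [false])
    have h1 := ih (w ++ [true])
    rw [strSum, strSum, mul_add]
    exact add_le_add h0 h1

theorem two_pow_mul_le_strSum {F : List Bool → ℝ} (h : ∀ v b, F v ≤ F (v ++ [b])) (k : ℕ)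
    (w : List Bool) : 2 ^ k * F w ≤ strSum F k w := by
  induction k with
  | zero => simp [strSum]
  | succ k ih =>
    have := two_mul_strSum_le h k w
    rw [pow_succ]; linarith

theorem strSum_le_nil {F : List Bool → ℝ} (h : ∀ v, 0 ≤ F v) (k : ℕ) (w : List Bool) :
    strSum F k w ≤ strSum F (k + w.length) [] := by
  induction w using List.reverseRecOn generalizing k with
  | nil => simp
  | append_singleton w b ih =>
    have h1 : strSum F k (w ++ [b]) ≤ strSum F (k + 1) w := by
      have h0 := strSum_nonneg h k (w ++ [false])
      have h1 := strSum_nonneg h k (w ++ [true])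
      rw [strSum]
      cases b <;> linarith
    refine h1.trans ((ih (k + 1)).trans_eq ?_)
    congr 1
    simp only [List.length_append, List.length_singleton]; omega

/-- The `k` lowest binary digits of `i`, lowest digit first. -/
def bits (k i : ℕ) : List Bool := (List.range k).map fun j => decide (i / 2 ^ j % 2 = 1)

theorem bits_succ_double (k i : ℕ) : bits (k + 1) (2 * i) = false :: bits k i := by
  simp only [bits, List.range_succ_eq_map, List.map_cons, List.map_map]
  congr 1
  · simp
  · refine List.map_congr_left fun j _ => ?_
    simp [pow_succ', ← Nat.div_div_eq_div_mul]

theorem bits_succ_double_add_one (k i : ℕ) : bits (k + 1) (2 * i + 1) = true :: bits k i := by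
  simp only [bits, List.range_succ_eq_map, List.map_cons, List.map_map]
  congr 1
  · simp
  · refine List.map_congr_left fun j _ => ?_
    have : (2 * i + 1) / 2 = i := by omega
    simp [pow_succ', ← Nat.div_div_eq_div_mul, this]

theorem sum_range_two_mul (f : ℕ → ℕ) (n : ℕ) :
    ∑ i ∈ Finset.range (2 * n), f i =
      ∑ i ∈ Finset.range n, f (2 * i) + ∑ i ∈ Finset.range n, f (2 * i + 1) := by
  induction n with
  | zero => simp
  | succ n ih =>
    rw [show 2 * (n + 1) = 2 * n + 1 + 1 by ring, Finset.sum_range_succ, Finset.sum_range_succ, ih,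
      Finset.sum_range_succ, Finset.sum_range_succ]
    ring

/-- A flat form of `strSum`, from which its computability is read off. -/
theorem strSum_eq_sum (F : List Bool → ℕ) (k : ℕ) (w : List Bool) :
    strSum F k w = ∑ i ∈ Finset.range (2 ^ k), F (w ++ bits k i) := by
  induction k generalizing w with
  | zero => simp [strSum, bits]
  | succ k ih =>
    rw [strSum, ih, ih, pow_succ', sum_range_two_mul]
    simp [bits_succ_double, bits_succ_double_add_one]

theorem primrec_bits : Primrec₂ bits := by
  have hj : Primrec fun z : (ℕ × ℕ) × ℕ => z.1.2 / 2 ^ z.2 % 2 := by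
    have hpow : Primrec fun n : ℕ => 2 ^ n :=
      (Primrec.nat_rec₁ 1 (Primrec.nat_mul.comp (Primrec.snd (α := ℕ) (β := ℕ))
        (Primrec.const 2)).to₂).of_eq fun n => by
        induction n with
        | zero => rfl
        | succ n ih => simp only [pow_succ, ih]
    exact Primrec.nat_mod.comp (Primrec.nat_div.comp (Primrec.snd.comp Primrec.fst)
      (hpow.comp Primrec.snd)) (Primrec.const 2)
  exact Primrec.list_map (Primrec.list_range.comp Primrec.fst)
    (PrimrecRel.comp Primrec.eq hj (Primrec.const 1)).decide.to₂

theorem computable_range_sum {α : Type*} [Primcodable α] {n : α → ℕ} {f : α → ℕ → ℕ}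
    (hn : Computable n) (hf : Computable₂ f) :
    Computable fun a => ∑ i ∈ Finset.range (n a), f a i := by
  refine (Computable.nat_rec (f := n) (g := fun _ => 0) (h := fun a p => p.2 + f a p.1) hn
    (Computable.const 0) (computable_add (Computable.snd.comp Computable.snd)
      (hf.comp Computable.fst (Computable.fst.comp Computable.snd)))).of_eq fun a => ?_
  induction n a with
  | zero => rfl
  | succ n ih => simp only [Finset.sum_range_succ, ← ih]

theorem computable_range_sup {α : Type*} [Primcodable α] {n : α → ℕ} {f : α → ℕ → ℕ}
    (hn : Computable n) (hf : Computable₂ f) :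
    Computable fun a => (Finset.range (n a)).sup (f a) := by
  refine (Computable.nat_rec (f := n) (g := fun _ => 0) (h := fun a p => max (f a p.1) p.2) hn
    (Computable.const 0) (computable_max
      (hf.comp Computable.fst (Computable.fst.comp Computable.snd))
      (Computable.snd.comp Computable.snd))).of_eq fun a => ?_
  induction n a with
  | zero => rfl
  | succ n ih => simp only [Finset.range_add_one, Finset.sup_insert, ← ih]

/-! ### From learning functions to gales -/

/-- The fraction of the extensions of `w` by `k` bits whose yes-count is at least `n` is at most
the conditional measure of the sequences with at least `n` yes answers. -/
theorem strSum_indicator_le {μ : Measure (ℕ → Bool)} [IsProbabilityMeasure μ]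
    (hμ : ∀ w : List Bool, μ (cylinder w) = (2 ^ w.length)⁻¹) (l : List Bool → Bool) (n k : ℕ)
    (w : List Bool) :
    strSum (fun v => if n ≤ yesCount l v then (1 : ℝ) else 0) k w ≤ 2 ^ (w.length + k) *
      μ.real ({Y | (n : ℕ∞) ≤ {m : ℕ | l (pref Y m) = true}.encard} ∩ cylinder w) := by
  set U := {Y : ℕ → Bool | (n : ℕ∞) ≤ {m : ℕ | l (pref Y m) = true}.encard} with hU
  induction k generalizing w with
  | zero =>
    rw [strSum]
    split_ifs with h
    · have hsub : cylinder w ⊆ U := by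
        intro Y hY
        rw [mem_cylinder_iff] at hY
        exact (le_encard_iff l Y n).2 ⟨w.length, by rwa [hY]⟩
      rw [Set.inter_eq_right.2 hsub, Measure.real, hμ]
      simp
    · positivity
  | succ k ih =>
    set B : Set (ℕ → Bool) := {Y | Y w.length = true} with hB
    have hBm : MeasurableSet B := measurableSet_eq_fun (measurable_pi_apply _) measurable_const
    have h1 : U ∩ cylinder (w ++ [true]) = (U ∩ cylinder w) ∩ B := by
      ext Y
      simp [mem_cylinder_iff, pref_succ, hB, and_assoc]
    have h0 : U ∩ cylinder (w ++ [false]) = (U ∩ cylinder w) \ B := by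
      ext Y
      simp [mem_cylinder_iff, pref_succ, hB, and_assoc]
    have h := measureReal_inter_add_sdiff (μ := μ) (s := U ∩ cylinder w) hBm
    rw [strSum, ← h, ← h0, ← h1]
    have e0 := ih (w ++ [false])
    have e1 := ih (w ++ [true])
    simp only [List.length_append, List.length_singleton] at e0 e1
    rw [show w.length + 1 + k = w.length + (k + 1) by ring] at e0 e1
    linarith

/-- The measure condition bounds the expectation of `r ^ yesCount` by a geometric series, uniformly
in the length; this is where `r < 2` is needed. -/
theorem strSum_rpow_le {μ : Measure (ℕ → Bool)}
    (hμ : ∀ w : List Bool, μ (cylinder w) = (2 ^ w.length)⁻¹) {l : List Bool → Bool}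
    (hl : MeasureCondition μ l) {r : ℝ} (hr0 : 0 ≤ r) (hr2 : r < 2) (k : ℕ) :
    strSum (fun v => r ^ yesCount l v) k [] ≤ 2 ^ k * (1 - r / 2)⁻¹ := by
  have : IsProbabilityMeasure μ := ⟨by rw [← cylinder_nil, hμ]; simp⟩
  have h1 : strSum (fun v => r ^ yesCount l v) k [] ≤
      strSum (fun v => ∑ n ∈ Finset.range (k + 2),
        r ^ n * (if n ≤ yesCount l v then (1 : ℝ) else 0)) k [] := by
    refine strSum_mono fun v hv => ?_
    have hy := yesCount_le l v
    have hmem : yesCount l v ∈ Finset.range (k + 2) := by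
      simp only [List.length_nil] at hv
      rw [Finset.mem_range]; omega
    refine le_trans ?_ (Finset.single_le_sum (f := fun n =>
      r ^ n * (if n ≤ yesCount l v then (1 : ℝ) else 0)) (fun n _ => ?_) hmem)
    · simp
    · positivity
  rw [strSum_finset_sum] at h1
  refine h1.trans ?_
  have h2 : ∀ n, strSum (fun v => if n ≤ yesCount l v then (1 : ℝ) else 0) k [] ≤
      2 ^ k * (2 ^ n)⁻¹ := by
    intro n
    refine (strSum_indicator_le hμ l n k []).trans ?_
    rw [cylinder_nil, Set.inter_univ, List.length_nil, zero_add]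
    refine mul_le_mul_of_nonneg_left ?_ (by positivity)
    rw [Measure.real]
    refine (ENNReal.toReal_mono (by simp) (hl n)).trans_eq ?_
    simp
  calc ∑ n ∈ Finset.range (k + 2),
        r ^ n * strSum (fun v => if n ≤ yesCount l v then (1 : ℝ) else 0) k []
      ≤ ∑ n ∈ Finset.range (k + 2), r ^ n * (2 ^ k * (2 ^ n)⁻¹) := by
        refine Finset.sum_le_sum fun n _ => mul_le_mul_of_nonneg_left (h2 n) (by positivity)
    _ = 2 ^ k * ∑ n ∈ Finset.range (k + 2), (r / 2) ^ n := by
        rw [Finset.mul_sum]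
        refine Finset.sum_congr rfl fun n _ => ?_
        rw [div_pow]; ring
    _ ≤ 2 ^ k * (1 - r / 2)⁻¹ := by
        refine mul_le_mul_of_nonneg_left ?_ (by positivity)
        rw [← tsum_geometric_of_lt_one (by positivity) (by linarith)]
        exact (summable_geometric_of_lt_one (by positivity) (by linarith)).sum_le_tsum _
          fun i _ => by positivity

/-- The stage-`t` lower bound for the yes-count of `v` obtained from a lower approximation `g` of
the path averages: the maximum over prefixes `u` of `v` of `⌈g (u, t) * |u|⌉`. Taking the maximum
makes it monotone under extending `v`. -/
def stageCount (g : List Bool × ℕ → ℚ) (v : List Bool) (t : ℕ) : ℕ :=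
  (Finset.range (v.length + 1)).sup fun i => ⌈g (v.take i, t) * ((v.take i).length : ℚ)⌉₊

theorem computable_stageCount {g : List Bool × ℕ → ℚ} (hg : Computable g)
    (h0 : ∀ p, 0 ≤ g p) : Computable fun p : List Bool × ℕ => stageCount g p.1 p.2 := by
  refine computable_range_sup (Computable.succ.comp (Computable.list_length.comp Computable.fst)) ?_
  have htake : Computable fun z : (List Bool × ℕ) × ℕ => z.1.1.take z.2 :=
    Primrec.list_take.to_comp.comp Computable.snd (Computable.fst.comp Computable.fst)
  have hq : Computable fun z : (List Bool × ℕ) × ℕ => g (z.1.1.take z.2, z.1.2) :=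
    hg.comp (htake.pair (Computable.snd.comp Computable.fst))
  have hnum := computable_mul (computable_ratNum.comp hq) (Computable.list_length.comp htake)
  have hden := computable_ratDen.comp hq
  refine (computable_natDiv (computable_add hnum (Computable.pred.comp hden)) hden).of_eq
    fun z => ?_
  refine eq_of_forall_ge_iff fun c => ?_
  have hd := ratDen_pos (g (z.1.1.take z.2, z.1.2))
  have hdq : (0 : ℚ) < ratDen (g (z.1.1.take z.2, z.1.2)) := by exact_mod_cast hd
  rw [Nat.ceil_le]
  conv_rhs => rw [← ratNum_div_ratDen (h0 (z.1.1.take z.2, z.1.2)), div_mul_eq_mul_div,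
    div_le_iff₀ hdq]
  rw [← Nat.lt_succ_iff, Nat.div_lt_iff_lt_mul hd, Nat.succ_mul]
  norm_cast
  simp only [Nat.pred_eq_sub_one]
  omega

theorem stageCount_mono {g : List Bool × ℕ → ℚ} (hg : ∀ w t, g (w, t) ≤ g (w, t + 1))
    (v : List Bool) (t : ℕ) : stageCount g v t ≤ stageCount g v (t + 1) := by
  refine Finset.sup_mono_fun fun i _ => Nat.ceil_mono ?_
  exact mul_le_mul_of_nonneg_right (hg _ _) (by positivity)

theorem stageCount_append (g : List Bool × ℕ → ℚ) (v : List Bool) (b : Bool) (t : ℕ) :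
    stageCount g v t ≤ stageCount g (v ++ [b]) t := by
  refine Finset.sup_le fun i hi => ?_
  rw [Finset.mem_range] at hi
  have hi' : i ∈ Finset.range ((v ++ [b]).length + 1) := by
    rw [Finset.mem_range]; simp; omega
  refine le_trans ?_ (Finset.le_sup (f := fun i =>
    ⌈g ((v ++ [b]).take i, t) * (((v ++ [b]).take i).length : ℚ)⌉₊) hi')
  rw [List.take_append_of_le_length (by omega)]

theorem stageCount_le {g : List Bool × ℕ → ℚ} {l : List Bool → Bool}
    (hg : ∀ w t, (g (w, t) : ℝ) ≤ pathAvg l w) (v : List Bool) (t : ℕ) :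
    stageCount g v t ≤ yesCount l v := by
  refine Finset.sup_le fun i _ => le_trans ?_ (yesCount_take_le l v i)
  rw [Nat.ceil_le]
  have h := hg (v.take i) t
  rw [pathAvg_eq] at h
  rcases Nat.eq_zero_or_pos (v.take i).length with h0 | h0
  · simp [h0]
  · rw [le_div_iff₀ (by exact_mod_cast h0)] at h
    exact_mod_cast h

theorem eventually_le_stageCount {g : List Bool × ℕ → ℚ} {l : List Bool → Bool}
    (hg : ∀ w, Tendsto (fun t => (g (w, t) : ℝ)) atTop (nhds (pathAvg l w)))
    {v : List Bool} (hv : v ≠ []) : ∀ᶠ t in atTop, yesCount l v ≤ stageCount g v t := by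
  have hlen : 0 < v.length := List.length_pos_iff.2 hv
  have hlen' : (0 : ℝ) < v.length := by exact_mod_cast hlen
  have hlim : Tendsto (fun t => (g (v, t) : ℝ) * v.length) atTop (nhds (yesCount l v)) := by
    have := (hg v).mul_const (v.length : ℝ)
    rwa [pathAvg_eq, div_mul_cancel₀ _ hlen'.ne'] at this
  filter_upwards [hlim.eventually (lt_mem_nhds (sub_one_lt (yesCount l v : ℝ)))] with t ht
  have hmem : v.length ∈ Finset.range (v.length + 1) := by simp
  refine le_trans ?_ (Finset.le_sup (f := fun i =>
    ⌈g (v.take i, t) * ((v.take i).length : ℚ)⌉₊) hmem)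
  simp only [List.take_length]
  have h2 : (g (v, t) : ℝ) * v.length ≤ (⌈g (v, t) * (v.length : ℚ)⌉₊ : ℝ) := by
    exact_mod_cast Nat.le_ceil (g (v, t) * (v.length : ℚ))
  have h3 : (yesCount l v : ℝ) < (⌈g (v, t) * (v.length : ℚ)⌉₊ : ℝ) + 1 := by linarith
  exact Nat.lt_succ_iff.1 (by exact_mod_cast h3)

/-- The stage-`t` approximation `(q / 2) ^ |w| * E[(a / b) ^ stageCount]` of the gale built from
`g`, where `q = e / f` and the expectation is over the extensions of `w` of length `t`; it is `0`
if `t < |w|`. The powers of `b` clear denominators, as stage counts are at most `t + 1`. -/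
def galeApprox (g : List Bool × ℕ → ℚ) (a b e f : ℕ) (p : List Bool × ℕ) : ℚ :=
  ((if p.1.length ≤ p.2 then 1 else 0) * e ^ p.1.length *
    strSum (fun v => a ^ stageCount g v p.2 * b ^ (p.2 + 1 - stageCount g v p.2))
      (p.2 - p.1.length) p.1 : ℕ) /
  ((f ^ p.1.length * (2 ^ p.2 * b ^ (p.2 + 1)) : ℕ) : ℚ)

theorem computable_galeApprox {g : List Bool × ℕ → ℚ} (hg : Computable g) (h0 : ∀ p, 0 ≤ g p)
    (a b e f : ℕ) : Computable (galeApprox g a b e f) := by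
  have hlen : Computable fun p : List Bool × ℕ => p.1.length :=
    Computable.list_length.comp Computable.fst
  have ht : Computable fun p : List Bool × ℕ => p.2 := Computable.snd
  have hif : Computable fun p : List Bool × ℕ => if p.1.length ≤ p.2 then 1 else 0 := by
    refine (computable_sub (Computable.const 1) (computable_sub hlen ht)).of_eq fun p => ?_
    split_ifs <;> omega
  have hk := computable_sub ht hlen
  have hv : Computable fun z : (List Bool × ℕ) × ℕ =>
      (z.1.1 ++ bits (z.1.2 - z.1.1.length) z.2, z.1.2) :=
    Computable.pair (Computable.list_append.comp (Computable.fst.comp Computable.fst)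
      (primrec_bits.to_comp.comp (hk.comp Computable.fst) Computable.snd))
      (Computable.snd.comp Computable.fst)
  have hc := (computable_stageCount hg h0).comp hv
  have hF := computable_mul (computable_pow (Computable.const a) hc)
    (computable_pow (Computable.const b)
      (computable_sub (Computable.succ.comp (Computable.snd.comp Computable.fst)) hc))
  have hS := computable_range_sum (computable_pow (Computable.const 2) hk) hF.to₂
  refine (computable_ratDiv
    (computable_mul (computable_mul hif (computable_pow (Computable.const e) hlen)) hS)
    (computable_mul (computable_pow (Computable.const f) hlen)
      (computable_mul (computable_pow (Computable.const 2) ht)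
        (computable_pow (Computable.const b) (Computable.succ.comp ht))))).of_eq fun p => ?_
  rw [galeApprox, strSum_eq_sum]

theorem galeApprox_eq {g : List Bool × ℕ → ℚ} {l : List Bool → Bool}
    (hg : ∀ w t, (g (w, t) : ℝ) ≤ pathAvg l w) {a b e f : ℕ} (hb : 0 < b) {w : List Bool} {t : ℕ}
    (hwt : w.length ≤ t) :
    (galeApprox g a b e f (w, t) : ℝ) = (e / f : ℝ) ^ w.length *
      (strSum (fun v => (a / b : ℝ) ^ stageCount g v t) (t - w.length) w / 2 ^ t) := by
  have hb' : (b : ℝ) ≠ 0 := by positivity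
  have h1 : strSum (fun v => (a / b : ℝ) ^ stageCount g v t) (t - w.length) w =
      strSum (fun v => ((a ^ stageCount g v t * b ^ (t + 1 - stageCount g v t) : ℕ) : ℝ) /
        (b : ℝ) ^ (t + 1)) (t - w.length) w := by
    have key : ∀ v : List Bool, v.length = w.length + (t - w.length) →
        (a / b : ℝ) ^ stageCount g v t =
        ((a ^ stageCount g v t * b ^ (t + 1 - stageCount g v t) : ℕ) : ℝ) /
        (b : ℝ) ^ (t + 1) := by
      intro v hv
      have hc : stageCount g v t ≤ t + 1 := by
        have h2 := stageCount_le hg v t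
        have h3 := yesCount_le l v
        omega
      conv_rhs => rw [← Nat.sub_add_cancel hc, pow_add]
      push_cast
      rw [Nat.sub_add_cancel hc, div_pow]
      field_simp
    exact le_antisymm (strSum_mono fun v hv => (key v hv).le)
      (strSum_mono fun v hv => (key v hv).ge)
  rw [h1, strSum_div, ← cast_strSum, galeApprox]
  simp only [hwt, if_true, one_mul]
  push_cast
  rw [div_pow]
  simp only [div_div, div_mul_div_comm]
  congr 1
  ring

theorem galeApprox_of_lt {g : List Bool × ℕ → ℚ} {a b e f : ℕ} {w : List Bool} {t : ℕ}
    (hwt : t < w.length) : galeApprox g a b e f (w, t) = 0 := by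
  simp [galeApprox, not_le.2 hwt]

/-- The gale built from a learning function `l` for `q = e / f` and `r = a / b` in `[1, 2)`: it is
an `s`-gale for `q = 2 ^ s` and dominates `(q / 2) ^ |w| * r ^ yesCount l w`. -/
theorem exists_gale {μ : Measure (ℕ → Bool)}
    (hμ : ∀ w : List Bool, μ (cylinder w) = (2 ^ w.length)⁻¹) {l : List Bool → Bool}
    (hl : MeasureCondition μ l) (hlsc : LowerSemicomputable (pathAvg l)) {a b e f : ℕ}
    (hb : 0 < b) (hf : 0 < f) (hr1 : 1 ≤ (a / b : ℝ)) (hr2 : (a / b : ℝ) < 2) :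
    ∃ d : List Bool → ℝ, LowerSemicomputable d ∧ (∀ w, 0 ≤ d w) ∧
      (∀ w, (e / f : ℝ) * d w = d (w ++ [false]) + d (w ++ [true])) ∧
      ∀ w, w ≠ [] → (e / f / 2 : ℝ) ^ w.length * (a / b : ℝ) ^ yesCount l w ≤ d w := by
  obtain ⟨g, hg, hgb, hglim⟩ := hlsc
  have hgle : ∀ w t, (g (w, t) : ℝ) ≤ pathAvg l w := fun w t => (hgb w t).2.2
  set r : ℝ := a / b with hr
  set q : ℝ := e / f with hq
  have hq0 : 0 ≤ q := by positivity
  have hr0 : 0 ≤ r := by positivity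
  set D : List Bool → ℕ → ℚ := fun w t => galeApprox g a b e f (w, t) with hD
  have hDeq : ∀ {w : List Bool} {t : ℕ}, w.length ≤ t → (D w t : ℝ) = q ^ w.length *
      (strSum (fun v => r ^ stageCount g v t) (t - w.length) w / 2 ^ t) :=
    fun h => galeApprox_eq hgle hb h
  have hDlt : ∀ {w : List Bool} {t : ℕ}, t < w.length → D w t = 0 := fun h => galeApprox_of_lt h
  have hD0 : ∀ w t, 0 ≤ D w t := fun w t => by
    simp only [hD, galeApprox]; positivity
  have hmono1 : ∀ w t, (D w t : ℝ) ≤ D w (t + 1) := by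
    intro w t
    rcases Nat.lt_or_ge t w.length with h | h
    · rw [hDlt h]; exact_mod_cast hD0 w (t + 1)
    · rw [hDeq h, hDeq (h.trans (Nat.le_succ t))]
      refine mul_le_mul_of_nonneg_left ?_ (by positivity)
      have h2 := two_mul_strSum_le (F := fun v => r ^ stageCount g v t)
        (G := fun v => r ^ stageCount g v (t + 1))
        (fun v b => pow_le_pow_right₀ hr1 ((stageCount_append g v b t).trans
          (stageCount_mono (fun w t => (hgb w t).2.1) _ t))) (t - w.length) w
      rw [show t + 1 - w.length = t - w.length + 1 by omega, pow_succ,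
        div_le_div_iff₀ (by positivity) (by positivity)]
      have : (0 : ℝ) < 2 ^ t := by positivity
      nlinarith
  have hmono : ∀ w, Monotone fun t => (D w t : ℝ) := fun w => monotone_nat_of_le_succ (hmono1 w)
  have hbdd : ∀ w, BddAbove (Set.range fun t => (D w t : ℝ)) := by
    intro w
    refine ⟨q ^ w.length * (1 - r / 2)⁻¹, ?_⟩
    have hpos : 0 < 1 - r / 2 := by linarith
    rintro _ ⟨t, rfl⟩
    rcases Nat.lt_or_ge t w.length with h | h
    · simp only [hDlt h, Rat.cast_zero]; positivity
    · simp only [hDeq h]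
      refine mul_le_mul_of_nonneg_left ?_ (by positivity)
      rw [div_le_iff₀ (by positivity), mul_comm]
      refine le_trans ?_ (strSum_rpow_le hμ hl hr0 hr2 t)
      refine (strSum_le_nil (fun v => by positivity) _ _).trans ?_
      rw [Nat.sub_add_cancel h]
      exact strSum_mono fun v _ => pow_le_pow_right₀ hr1 (stageCount_le hgle v t)
  set d : List Bool → ℝ := fun w => ⨆ t, (D w t : ℝ) with hd
  have hlim : ∀ w, Tendsto (fun t => (D w t : ℝ)) atTop (nhds (d w)) :=
    fun w => tendsto_atTop_ciSup (hmono w) (hbdd w)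
  have hled : ∀ w t, (D w t : ℝ) ≤ d w := fun w t => le_ciSup (hbdd w) t
  refine ⟨d, ⟨galeApprox g a b e f, computable_galeApprox hg (fun p => (hgb p.1 p.2).1) a b e f,
    fun w t => ⟨hD0 w t, by exact_mod_cast hmono1 w t, hled w t⟩, hlim⟩,
    fun w => le_trans (by exact_mod_cast hD0 w 0) (hled w 0), fun w => ?_, fun w hw => ?_⟩
  · refine tendsto_nhds_unique ((hlim w).const_mul q)
      (((hlim (w ++ [false])).add (hlim (w ++ [true]))).congr' ?_)
    filter_upwards [eventually_ge_atTop (w.length + 1)] with t ht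
    rw [hDeq (by simpa using ht), hDeq (by simpa using ht), hDeq (by omega : w.length ≤ t)]
    simp only [List.length_append, List.length_singleton]
    rw [show t - w.length = t - (w.length + 1) + 1 by omega, strSum]
    ring
  · obtain ⟨t, ht1, ht2⟩ := ((eventually_le_stageCount hglim hw).and
      (eventually_ge_atTop w.length)).exists
    refine le_trans ?_ (hled w t)
    rw [hDeq ht2, div_pow, div_mul_eq_mul_div, mul_div_assoc]
    refine mul_le_mul_of_nonneg_left ?_ (by positivity)
    rw [div_le_div_iff₀ (by positivity) (by positivity)]
    have h1 := two_pow_mul_le_strSum (F := fun v => r ^ stageCount g v t)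
      (fun v b => pow_le_pow_right₀ hr1 (stageCount_append g v b t)) (t - w.length) w
    have h2 : (2 : ℝ) ^ t = 2 ^ (t - w.length) * 2 ^ w.length := by
      rw [← pow_add, Nat.sub_add_cancel ht2]
    have h3 : r ^ yesCount l w ≤ r ^ stageCount g w t := pow_le_pow_right₀ hr1 ht1
    rw [h2]
    calc r ^ yesCount l w * (2 ^ (t - w.length) * 2 ^ w.length)
        ≤ r ^ stageCount g w t * (2 ^ (t - w.length) * 2 ^ w.length) := by gcongr
      _ = 2 ^ (t - w.length) * r ^ stageCount g w t * 2 ^ w.length := by ring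
      _ ≤ _ := by gcongr

/-- A learner for `Γ` at `s` yields a lower semicomputable `s'`-gale succeeding strongly on `Γ` for
some `s' ≤ s + ε`: along `X ∈ Γ` the gale of `exists_gale` grows at least like
`2 ^ ((s' - 1 + ρ * α) * n)`, where `2 ^ ρ = a / b` and `α` is a lower bound on the path averages. -/
theorem gale_of_learnable {μ : Measure (ℕ → Bool)}
    (hμ : ∀ w : List Bool, μ (cylinder w) = (2 ^ w.length)⁻¹) {Γ : Set (ℕ → Bool)} {s : ℝ}
    (hs : 0 ≤ s) {l : List Bool → Bool} (hlsc : LowerSemicomputable (pathAvg l))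
    (hΓ : ∀ X ∈ Γ, StronglySLearns μ l s X) {ε : ℝ} (hε : 0 < ε) :
    ∃ s', s' ≤ s + ε ∧ 0 ≤ s' ∧
      ∃ d, IsGale s' d ∧ LowerSemicomputable d ∧ ∀ X ∈ Γ, SucceedsStronglyOn d X := by
  rcases Γ.eq_empty_or_nonempty with rfl | ⟨X₀, hX₀⟩
  · -- the zero gale; `l` need not satisfy the measure condition here
    refine ⟨s, by linarith, hs, fun _ => 0, ⟨fun _ => le_rfl, fun _ => by simp⟩,
      ⟨fun _ => 0, Computable.const 0, fun w t => by simp, fun w => by simp⟩, by simp⟩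
  have hl : MeasureCondition μ l := (hΓ X₀ hX₀).1
  obtain ⟨s', e, f, hss, hs', he, hf, hq⟩ := exists_rat_rpow s hε
  -- averages eventually exceed `α < 1 - s`; `ρ < 1` is so close to `1` that `s' - 1 + ρ * α > 0`
  set δ := s' - s with hδ
  have hδ0 : 0 < δ := by linarith
  set α := 1 - s - δ / 2 with hα
  set η := min 1 (δ / (4 * (|α| + 1))) with hη
  have hη0 : 0 < η := lt_min one_pos (by positivity)
  have hη1 : η ≤ 1 := min_le_left _ _
  have hη2 : η * |α| ≤ δ / 4 := by
    have h1 : η ≤ δ / (4 * (|α| + 1)) := min_le_right _ _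
    rw [le_div_iff₀ (by positivity)] at h1
    nlinarith [abs_nonneg α]
  obtain ⟨ρ, a, b, hρ1, hρ2, ha, hb, hr⟩ := exists_rat_rpow (1 - η) (half_pos hη0)
  have hρ0 : 0 < ρ := by linarith
  have hρlt : ρ < 1 := by linarith
  have hκ : 0 < s' - 1 + ρ * α := by
    have h1 : (1 - ρ) * α ≤ η * |α| :=
      (mul_le_mul_of_nonneg_left (le_abs_self α) (by linarith)).trans
        (mul_le_mul_of_nonneg_right (by linarith) (abs_nonneg α))
    have h2 : s' - 1 + α = δ / 2 := by rw [hα, hδ]; ring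
    linarith
  obtain ⟨d, hdl, hd0, hdg, hdle⟩ := exists_gale hμ hl hlsc (a := a) (b := b) (e := e) (f := f)
    hb hf (by rw [← hr]; exact Real.one_le_rpow (by norm_num) hρ0.le)
    (by rw [← hr]; simpa using Real.rpow_lt_rpow_of_exponent_lt one_lt_two hρlt)
  refine ⟨s', hs', by linarith, d, ⟨hd0, fun w => by rw [hq]; exact hdg w⟩, hdl, fun X hX => ?_⟩
  have hpow : Tendsto (fun n : ℕ => ((2 : ℝ) ^ (s' - 1 + ρ * α)) ^ n) atTop atTop :=
    tendsto_pow_atTop_atTop_of_one_lt (Real.one_lt_rpow one_lt_two hκ)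
  refine tendsto_atTop_mono' _ ?_ hpow
  filter_upwards [eventually_lt_pathAvg (hΓ X hX).2 (b := α) (by linarith),
    eventually_gt_atTop 0] with n h1 h2
  have hn : (0 : ℝ) < n := by exact_mod_cast h2
  have hne : pref X n ≠ [] := fun h => by
    have := congrArg List.length h
    simp at this; omega
  refine le_trans ?_ (hdle _ hne)
  rw [pathAvg_eq, length_pref, lt_div_iff₀ hn] at h1
  have h3 : (e / f / 2 : ℝ) = (2 : ℝ) ^ (s' - 1) := by
    rw [Real.rpow_sub (by norm_num), hq, Real.rpow_one]
  rw [length_pref, h3, ← hr, ← Real.rpow_mul_natCast (by norm_num),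
    ← Real.rpow_mul_natCast (by norm_num), ← Real.rpow_mul_natCast (by norm_num),
    ← Real.rpow_add (by norm_num)]
  refine Real.rpow_le_rpow_of_exponent_le (by norm_num) ?_
  nlinarith

/-- The learner that never says yes shows that the set of admissible `s` is nonempty. -/
theorem zero_le_and_learnable_one {μ : Measure (ℕ → Bool)}
    (hμ : ∀ w : List Bool, μ (cylinder w) = (2 ^ w.length)⁻¹) (Γ : Set (ℕ → Bool)) :
    (0 : ℝ) ≤ 1 ∧ ∃ l : List Bool → Bool,
      LowerSemicomputable (pathAvg l) ∧ ∀ X ∈ Γ, StronglySLearns μ l 1 X := by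
  have havg : ∀ w, pathAvg (fun _ => false) w = 0 := fun w => by simp [pathAvg]
  refine ⟨zero_le_one, fun _ => false, ⟨fun _ => 0, Computable.const 0, fun w t => by simp [havg],
    fun w => by simp [havg]⟩, fun X _ => ⟨fun n => ?_, by simp [havg]⟩⟩
  rcases Nat.eq_zero_or_pos n with rfl | hn
  · refine (measure_mono (Set.subset_univ _)).trans ?_
    rw [← cylinder_nil, hμ]; simp
  · simp [hn.ne']

/-! ### Equality of the two infima -/

/-- The algorithmic strong dimension of `Γ` equals the infimum of all
`s ∈ [0,∞)` such that some learning function strongly algorithmically `s`-learns every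
`X ∈ Γ`. -/
theorem aDim_eq_inf_strongly_algorithmically_s_learnable
    (μ : Measure (ℕ → Bool)) (hμ : ∀ w : List Bool, μ (cylinder w) = (2 ^ w.length)⁻¹)
    (Γ : Set (ℕ → Bool)) :
    aDim Γ = sInf {s : ℝ | 0 ≤ s ∧ ∃ l : List Bool → Bool,
      LowerSemicomputable (pathAvg l) ∧ ∀ X ∈ Γ, StronglySLearns μ l s X} := by
  rw [aDim]
  have hne := zero_le_and_learnable_one hμ Γ
  obtain ⟨h0, l₀, hlsc₀, hl₀⟩ := zero_le_and_learnable_one hμ Γ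
  obtain ⟨s₀, _, hs₀⟩ := gale_of_learnable hμ h0 hlsc₀ hl₀ one_pos
  refine le_antisymm (le_csInf ⟨1, hne⟩ ?_) (le_csInf ⟨s₀, hs₀⟩ ?_)
  · rintro s ⟨hs, l, hlsc, hl⟩
    refine le_of_forall_pos_le_add fun ε hε => ?_
    obtain ⟨s', hs', h⟩ := gale_of_learnable hμ hs hlsc hl hε
    refine (csInf_le ⟨(0 : ℝ), fun _ hx => hx.1⟩ ?_).trans hs'
    exact h
  · rintro s ⟨hs, d, hd, hlsc, hΓ⟩
    refine le_of_forall_pos_le_add fun ε hε => ?_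
    obtain ⟨s', hs', h⟩ := learnable_of_gale hμ hs hd hlsc hΓ hε
    refine (csInf_le ⟨(0 : ℝ), fun _ hx => hx.1⟩ ?_).trans hs'
    exact h
end

section
/- If a learning function l1 uniformly weakly detects that every X ∈ Γ1 is patterned and a learning function l2 uniformly weakly detects that every X ∈ Γ2 is patterned, then there exists a learning function l3 that uniformly weakly detects that every X ∈ Γ1 ∪ Γ2 is patterned; moreover, if l1 and l2 are computable, then l3 can be chosen to be computable. -/
/-!
Let `N₁`, `N₂` be the numbers of yes-answers given by `l₁` and `l₂` along a sequence `Y`. The event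
`n + 1 ≤ max N₁ N₂` is contained in the union of two events of measure at most `2 ^ (-(n + 1))`, so
it has measure at most `2 ^ (-n)`. Hence a learning function that answers yes exactly
`max N₁ N₂ - 1` times along each `Y` satisfies the measure condition, and it answers yes infinitely
often as soon as `l₁` or `l₂` does.

Such a function exists because the running maximum of the two counts grows by at most one per bit:
`merged l₁ l₂ w` says yes exactly when this maximum grows at `w` and reaches a value at least `2`
(`count_merged`). It is computable relative to `l₁` and `l₂` (`computable_merged`).

If `Γ₁` or `Γ₂` is empty, nothing is known about the measure condition for the corresponding
learning function, and the other one is taken as `l₃`.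
-/

open Filter MeasureTheory
open scoped ENNReal

/-- `l` uniformly weakly detects that `X` is patterned (w.r.t. `μ`):
`l` says yes on infinitely many prefixes of `X`, and `l` satisfies the measure
condition. -/
def UWD (μ : Measure (ℕ → Bool)) (l : List Bool → Bool) (X : ℕ → Bool) : Prop :=
  (∃ᶠ m in Filter.atTop, l (pref X m) = true) ∧ MeasureCondition μ l

/-- The number of proper prefixes of `w` on which `l` says yes. -/
def earlierYes (l : List Bool → Bool) (w : List Bool) : ℕ :=
  Nat.count (fun k => l (w.take k) = true) w.length

/-- The number of prefixes of `w`, including `w` itself, on which `l` says yes. -/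
def totalYes (l : List Bool → Bool) (w : List Bool) : ℕ :=
  earlierYes l w + cond (l w) 1 0

/-- Says yes at `w` when the larger of the two yes-counts increases at `w` to a value at least
`2`. -/
def merged (l₁ l₂ : List Bool → Bool) (w : List Bool) : Bool :=
  decide (max 1 (max (earlierYes l₁ w) (earlierYes l₂ w)) < max (totalYes l₁ w) (totalYes l₂ w))

theorem computable_earlierYes {l : List Bool → Bool} (hl : Computable l) :
    Computable (earlierYes l) := by
  have hstep : Computable₂ fun (w : List Bool) (p : ℕ × ℕ) =>
      p.2 + cond (l (w.take p.1)) 1 0 := by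
    refine Primrec.nat_add.to_comp.comp (Computable.snd.comp Computable.snd)
      (Computable.cond (hl.comp (Primrec.list_take.to_comp.comp
        (Computable.fst.comp Computable.snd) Computable.fst))
        (Computable.const 1) (Computable.const 0))
  refine (Computable.nat_rec Computable.list_length (Computable.const 0) hstep).of_eq fun w => ?_
  unfold earlierYes
  induction w.length with
  | zero => simp
  | succ n ih =>
    rw [Nat.count_succ, ← ih]
    cases h : l (w.take n) <;> simp [h]

theorem computable_totalYes {l : List Bool → Bool} (hl : Computable l) :
    Computable (totalYes l) :=
  Primrec.nat_add.to_comp.comp (computable_earlierYes hl)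
    (Computable.cond hl (Computable.const 1) (Computable.const 0))

theorem computable_merged {l₁ l₂ : List Bool → Bool} (h₁ : Computable l₁) (h₂ : Computable l₂) :
    Computable (merged l₁ l₂) :=
  Primrec.nat_lt.decide.to_comp.comp
    (Primrec.nat_max.to_comp.comp (Computable.const 1)
      (Primrec.nat_max.to_comp.comp (computable_earlierYes h₁) (computable_earlierYes h₂)))
    (Primrec.nat_max.to_comp.comp (computable_totalYes h₁) (computable_totalYes h₂))

theorem earlierYes_pref (l : List Bool → Bool) (Y : ℕ → Bool) (N : ℕ) :
    earlierYes l (pref Y N) = Nat.count (fun m => l (pref Y m) = true) N := by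
  have hlen : (pref Y N).length = N := by simp [pref]
  have htake : ∀ k < N, (pref Y N).take k = pref Y k := by
    intro k hk
    simp [pref, ← List.map_take, List.take_range, hk.le]
  unfold earlierYes
  rw [hlen, Nat.count_eq_card_filter_range, Nat.count_eq_card_filter_range]
  congr 1
  refine Finset.filter_congr fun k hk => ?_
  rw [htake k (Finset.mem_range.1 hk)]

theorem totalYes_pref (l : List Bool → Bool) (Y : ℕ → Bool) (N : ℕ) :
    totalYes l (pref Y N) = Nat.count (fun m => l (pref Y m) = true) (N + 1) := by
  rw [totalYes, earlierYes_pref, Nat.count_succ]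
  cases l (pref Y N) <;> simp

/-- Along any sequence, `merged l₁ l₂` says yes once less than the more affirmative of `l₁` and
`l₂`; the subtraction is truncated. -/
theorem count_merged (l₁ l₂ : List Bool → Bool) (Y : ℕ → Bool) (N : ℕ) :
    Nat.count (fun m => merged l₁ l₂ (pref Y m) = true) N =
      max (Nat.count (fun m => l₁ (pref Y m) = true) N)
        (Nat.count (fun m => l₂ (pref Y m) = true) N) - 1 := by
  induction N with
  | zero => simp
  | succ N ih =>
    rw [Nat.count_succ, ih]
    simp only [merged, earlierYes_pref, totalYes_pref, decide_eq_true_eq]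
    have e₁ := Nat.count_succ (fun m => l₁ (pref Y m) = true) N
    have e₂ := Nat.count_succ (fun m => l₂ (pref Y m) = true) N
    split_ifs at * <;> omega

theorem le_encard_iff_exists_count (p : ℕ → Prop) [DecidablePred p] (n : ℕ) :
    (n : ℕ∞) ≤ {m | p m}.encard ↔ ∃ N, n ≤ Nat.count p N := by
  constructor
  · intro h
    obtain ⟨t, hts, htn⟩ := Set.exists_subset_encard_eq h
    have hfin : t.Finite := Set.finite_of_encard_eq_coe htn
    obtain ⟨N, hN⟩ := hfin.bddAbove
    refine ⟨N + 1, ?_⟩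
    rw [hfin.encard_eq_coe_toFinset_card, Nat.cast_inj] at htn
    rw [Nat.count_eq_card_filter_range, ← htn]
    refine Finset.card_le_card fun m hm => ?_
    rw [Set.Finite.mem_toFinset] at hm
    exact Finset.mem_filter.2 ⟨Finset.mem_range.2 (Nat.lt_succ_of_le (hN hm)), hts hm⟩
  · rintro ⟨N, hN⟩
    rw [Nat.count_eq_card_filter_range] at hN
    calc (n : ℕ∞) ≤ ((Finset.range N).filter p).card := by exact_mod_cast hN
      _ = (((Finset.range N).filter p : Finset ℕ) : Set ℕ).encard :=
        (Set.encard_coe_eq_coe_finsetCard _).symm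
      _ ≤ {m | p m}.encard := Set.encard_le_encard fun m hm => (Finset.mem_filter.1 hm).2

theorem frequently_iff_forall_exists_count (p : ℕ → Prop) [DecidablePred p] :
    (∃ᶠ m in Filter.atTop, p m) ↔ ∀ n, ∃ N, n ≤ Nat.count p N := by
  simp only [← le_encard_iff_exists_count]
  rw [Nat.frequently_atTop_iff_infinite, ← Set.encard_eq_top_iff, ENat.eq_top_iff_forall_ge]

theorem measureCondition_merged (μ : Measure (ℕ → Bool)) (hμ : μ Set.univ = 1)
    {l₁ l₂ : List Bool → Bool} (h₁ : MeasureCondition μ l₁) (h₂ : MeasureCondition μ l₂) :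
    MeasureCondition μ (merged l₁ l₂) := by
  intro n
  -- For `n = 0` truncated subtraction makes the inclusion below fail; the bound is then `1`.
  rcases Nat.eq_zero_or_pos n with rfl | hn
  · simp [hμ]
  have hsub : {Y | (n : ℕ∞) ≤ {m : ℕ | merged l₁ l₂ (pref Y m) = true}.encard} ⊆
      {Y | ((n + 1 : ℕ) : ℕ∞) ≤ {m : ℕ | l₁ (pref Y m) = true}.encard} ∪
      {Y | ((n + 1 : ℕ) : ℕ∞) ≤ {m : ℕ | l₂ (pref Y m) = true}.encard} := by
    intro Y hY
    simp only [Set.mem_union, Set.mem_ofPred_eq, le_encard_iff_exists_count, count_merged] at hY ⊢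
    obtain ⟨N, hN⟩ := hY
    rcases le_total (Nat.count (fun m => l₁ (pref Y m) = true) N)
      (Nat.count (fun m => l₂ (pref Y m) = true) N) with h | h
    · exact Or.inr ⟨N, by omega⟩
    · exact Or.inl ⟨N, by omega⟩
  calc _ ≤ _ := measure_mono hsub
    _ ≤ _ := measure_union_le _ _
    _ ≤ (2 ^ (n + 1))⁻¹ + (2 ^ (n + 1))⁻¹ := add_le_add (h₁ (n + 1)) (h₂ (n + 1))
    _ = (2 ^ n)⁻¹ := by
      rw [pow_succ, ENNReal.mul_inv (by simp) (by simp), ← mul_add, ENNReal.inv_two_add_inv_two,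
        mul_one]

/-- Uniform weak detection is closed under finite unions, preserving
computability. -/
theorem uwd_union (μ : Measure (ℕ → Bool)) (hμ : ∀ w : List Bool, μ (cylinder w) = (2 ^ w.length)⁻¹)
    (Γ₁ Γ₂ : Set (ℕ → Bool)) (l₁ l₂ : List Bool → Bool)
    (h₁ : ∀ X ∈ Γ₁, UWD μ l₁ X) (h₂ : ∀ X ∈ Γ₂, UWD μ l₂ X) :
    ∃ l₃ : List Bool → Bool, (∀ X ∈ Γ₁ ∪ Γ₂, UWD μ l₃ X) ∧
      (Computable l₁ → Computable l₂ → Computable l₃) := by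
  rcases Γ₁.eq_empty_or_nonempty with rfl | ⟨X₁, hX₁⟩
  · exact ⟨l₂, by simpa using h₂, fun _ h => h⟩
  rcases Γ₂.eq_empty_or_nonempty with rfl | ⟨X₂, hX₂⟩
  · exact ⟨l₁, by simpa using h₁, fun h _ => h⟩
  have huniv : μ Set.univ = 1 := by
    have hnil : _root_.cylinder [] = Set.univ := by ext; simp [_root_.cylinder, pref]
    simpa [hnil] using hμ []
  refine ⟨merged l₁ l₂, fun X hX => ⟨?_, measureCondition_merged μ huniv (h₁ X₁ hX₁).2
    (h₂ X₂ hX₂).2⟩, computable_merged⟩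
  simp only [frequently_iff_forall_exists_count, count_merged]
  intro n
  rcases hX with hX | hX
  · obtain ⟨N, hN⟩ := (frequently_iff_forall_exists_count _).1 (h₁ X hX).1 (n + 1)
    exact ⟨N, by omega⟩
  · obtain ⟨N, hN⟩ := (frequently_iff_forall_exists_count _).1 (h₂ X hX).1 (n + 1)
    exact ⟨N, by omega⟩
end
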